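/- arXiv:1310.7337 — 5 statements merged into one kernel-verified Lean document; each statement's English description precedes it below -/
import Mathlib

section
/- Let E be a matrix factorization of f ∈ Q with chosen connections, and let φⁿ : E → Ω^{(n)}_{Q,df} ⊗_mf E be the composite (∧⊗1_E)∘φ^{(n)}∘φ^{(n−1)}∘⋯∘φ^{(1)}, where φ^{(i)} = 1^{⊗(i−1)} ⊗ φ and φ = (id, At) : E → (Q →^{df∧} Ω¹) ⊗_mf E. Then for each 0 ≤ i ≤ n, the component of φⁿ landing in Ωⁱ ⊗ E equals the binomial coefficient C(n,i) times Atⁱ; that is, φⁿ = Σ_{i=0}^{n} C(n,i)·Atⁱ. -/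
/-!
STATEMENT 5: For a matrix factorization E of f with chosen connections, the composite
φⁿ = (∧⊗1_E)∘φ^{(n)}∘⋯∘φ^{(1)} : E → Ω^{(n)}_{Q,df} ⊗_mf E satisfies
φⁿ = Σ_{i=0}^{n} C(n,i)·Atⁱ.

Here the i-th stage E^{(i)} = (Q →^{df∧} Ω¹)^{⊗i} ⊗ E is realized by the tower
`Tw 0 = E`, `Tw (i+1) = (Q ⊕ Ω¹) ⊗ Tw i`, with φ^{(i+1)} = 1^{⊗ i} ⊗ φ where
φ(e) = (1,0) ⊗ e + At(e), and the wedge map multiplies all the (Q ⊕ Ω¹)-factors into the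
exterior algebra of Ω¹, so that the target Ω^{(n)}_{Q,df} ⊗ E sits inside Λ•Ω¹ ⊗ E.
`Atⁱ : E → Λ•Ω¹ ⊗ E` is the i-fold iterate of the Atiyah class with the resulting
one-forms multiplied together (At⁰ = id).
-/

open TensorProduct

universe u
variable (k Q : Type u) [CommRing k] [CommRing Q] [Algebra k Q]

structure Conn (k Q E : Type u) [CommRing k] [CommRing Q] [Algebra k Q]
    [AddCommGroup E] [Module Q E] where
  toFun : E → (Ω[Q⁄k] ⊗[Q] E)
  map_add : ∀ x y, toFun (x + y) = toFun x + toFun y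
  leibniz : ∀ (q : Q) (x : E),
    toFun (q • x) = (KaehlerDifferential.D k Q) q ⊗ₜ[Q] x + q • toFun x

/-- The tower `Tw i` realizing `(Q →^{df∧} Ω¹)^{⊗ i} ⊗_mf E` (underlying modules). -/
noncomputable def Tw (E : Type u) [AddCommGroup E] [Module Q E] : ℕ → ModuleCat.{u} Q
  | 0 => ModuleCat.of Q E
  | (i+1) => ModuleCat.of Q ((Q × Ω[Q⁄k]) ⊗[Q] (Tw E i))

/-- `φ^{(i+1)} = 1^{⊗ i} ⊗ φ` where `φ = (id, At)`. -/
noncomputable def Phi (E : Type u) [AddCommGroup E] [Module Q E]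
    (At : E →ₗ[Q] Ω[Q⁄k] ⊗[Q] E) :
    ∀ i, (Tw k Q E i) →ₗ[Q] (Tw k Q E (i+1))
  | 0 => TensorProduct.mk Q (Q × Ω[Q⁄k]) E ((1 : Q), (0 : Ω[Q⁄k]))
      + (TensorProduct.map (LinearMap.inr Q Q (Ω[Q⁄k])) LinearMap.id) ∘ₗ At
  | (i+1) => LinearMap.lTensor (Q × Ω[Q⁄k]) (Phi E At i)

/-- The composite `φ^{(n)} ∘ ⋯ ∘ φ^{(1)} : E → E^{(n)}`. -/
noncomputable def psiTw (E : Type u) [AddCommGroup E] [Module Q E]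
    (At : E →ₗ[Q] Ω[Q⁄k] ⊗[Q] E) : ∀ n, E →ₗ[Q] Tw k Q E n
  | 0 => LinearMap.id
  | (n+1) => Phi k Q E At n ∘ₗ psiTw E At n

/-- `Q ⊕ Ω¹ → Λ•Ω¹`, `(q, ω) ↦ q + ω`. -/
noncomputable def jQ : (Q × Ω[Q⁄k]) →ₗ[Q] ExteriorAlgebra Q (Ω[Q⁄k]) :=
  (Algebra.linearMap Q (ExteriorAlgebra Q (Ω[Q⁄k]))) ∘ₗ LinearMap.fst Q Q (Ω[Q⁄k])
    + (ExteriorAlgebra.ι Q) ∘ₗ LinearMap.snd Q Q (Ω[Q⁄k])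

noncomputable def stepL (E : Type u) [AddCommGroup E] [Module Q E] :
    ((Q × Ω[Q⁄k]) ⊗[Q] (ExteriorAlgebra Q (Ω[Q⁄k]) ⊗[Q] E)) →ₗ[Q]
      (ExteriorAlgebra Q (Ω[Q⁄k]) ⊗[Q] E) :=
  (TensorProduct.map
      (TensorProduct.lift ((LinearMap.mul Q (ExteriorAlgebra Q (Ω[Q⁄k]))).comp (jQ k Q)))
      LinearMap.id) ∘ₗ
    (TensorProduct.assoc Q (Q × Ω[Q⁄k]) (ExteriorAlgebra Q (Ω[Q⁄k])) E).symm.toLinearMap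

/-- The wedge map `∧ ⊗ 1_E : E^{(n)} → Λ•Ω¹ ⊗ E`. -/
noncomputable def Wn (E : Type u) [AddCommGroup E] [Module Q E] :
    ∀ i, (Tw k Q E i) →ₗ[Q] (ExteriorAlgebra Q (Ω[Q⁄k]) ⊗[Q] E)
  | 0 => TensorProduct.mk Q (ExteriorAlgebra Q (Ω[Q⁄k])) E 1
  | (i+1) => stepL k Q E ∘ₗ LinearMap.lTensor (Q × Ω[Q⁄k]) (Wn E i)

/-- `Λ•Ω¹ ⊗ (Ω¹ ⊗ E) → Λ•Ω¹ ⊗ E`, multiplying the middle one-form in from the right. -/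
noncomputable def stepMul (E : Type u) [AddCommGroup E] [Module Q E] :
    (ExteriorAlgebra Q (Ω[Q⁄k]) ⊗[Q] (Ω[Q⁄k] ⊗[Q] E)) →ₗ[Q]
      (ExteriorAlgebra Q (Ω[Q⁄k]) ⊗[Q] E) :=
  (TensorProduct.map
      (TensorProduct.lift ((LinearMap.mul Q (ExteriorAlgebra Q (Ω[Q⁄k]))).compl₂
        (ExteriorAlgebra.ι Q)))
      LinearMap.id) ∘ₗ
    (TensorProduct.assoc Q (ExteriorAlgebra Q (Ω[Q⁄k])) (Ω[Q⁄k]) E).symm.toLinearMap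

/-- `Atⁱ : E → Λ•Ω¹ ⊗ E`. -/
noncomputable def atIter (E : Type u) [AddCommGroup E] [Module Q E]
    (At : E →ₗ[Q] Ω[Q⁄k] ⊗[Q] E) :
    ℕ → (E →ₗ[Q] ExteriorAlgebra Q (Ω[Q⁄k]) ⊗[Q] E)
  | 0 => TensorProduct.mk Q (ExteriorAlgebra Q (Ω[Q⁄k])) E 1
  | (i+1) => stepMul k Q E ∘ₗ
      (LinearMap.lTensor (ExteriorAlgebra Q (Ω[Q⁄k])) At) ∘ₗ atIter E At i

noncomputable def opT (E : Type u) [AddCommGroup E] [Module Q E]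
    (At : E →ₗ[Q] Ω[Q⁄k] ⊗[Q] E) :
    Module.End Q (ExteriorAlgebra Q (Ω[Q⁄k]) ⊗[Q] E) :=
  stepMul k Q E ∘ₗ (LinearMap.lTensor (ExteriorAlgebra Q (Ω[Q⁄k])) At)

theorem stepL_tmul (E : Type u) [AddCommGroup E] [Module Q E] (p : Q × Ω[Q⁄k])
    (a : ExteriorAlgebra Q (Ω[Q⁄k])) (e : E) :
    stepL k Q E (p ⊗ₜ (a ⊗ₜ e)) = (jQ k Q p * a) ⊗ₜ e := by
  simp [stepL]

theorem stepMul_tmul (E : Type u) [AddCommGroup E] [Module Q E] (w : Ω[Q⁄k])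
    (a : ExteriorAlgebra Q (Ω[Q⁄k])) (e : E) :
    stepMul k Q E (a ⊗ₜ (w ⊗ₜ e)) = (a * ExteriorAlgebra.ι Q w) ⊗ₜ e := by
  simp [stepMul]

theorem opT_stepL (E : Type u) [AddCommGroup E] [Module Q E]
    (At : E →ₗ[Q] Ω[Q⁄k] ⊗[Q] E) :
    stepL k Q E ∘ₗ LinearMap.lTensor (Q × Ω[Q⁄k]) (opT k Q E At)
      = opT k Q E At ∘ₗ stepL k Q E := by
  apply TensorProduct.ext'
  intro p x
  induction x using TensorProduct.induction_on with
  | zero => simp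
  | add x y hx hy => rw [TensorProduct.tmul_add, map_add, map_add, hx, hy]
  | tmul a e =>
    simp only [LinearMap.comp_apply, LinearMap.lTensor_tmul, opT, stepL_tmul]
    induction At e using TensorProduct.induction_on with
    | zero => simp
    | add x y hx hy => simp only [TensorProduct.tmul_add, map_add, hx, hy]
    | tmul w e' => simp only [stepMul_tmul, stepL_tmul, mul_assoc]

theorem Wn_Phi (E : Type u) [AddCommGroup E] [Module Q E]
    (At : E →ₗ[Q] Ω[Q⁄k] ⊗[Q] E) (n : ℕ) :
    Wn k Q E (n+1) ∘ₗ Phi k Q E At n = (opT k Q E At + 1) ∘ₗ Wn k Q E n := by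
  induction n with
  | zero =>
    apply LinearMap.ext
    intro (e : E)
    change stepL k Q E (LinearMap.lTensor (Q × Ω[Q⁄k])
      (TensorProduct.mk Q (ExteriorAlgebra Q (Ω[Q⁄k])) E 1)
      (((1 : Q), (0 : Ω[Q⁄k])) ⊗ₜ[Q] e
        + (TensorProduct.map (LinearMap.inr Q Q (Ω[Q⁄k])) LinearMap.id) (At e)))
      = stepMul k Q E (1 ⊗ₜ[Q] At e) + 1 ⊗ₜ[Q] e
    rw [map_add, map_add, add_comm]
    congr 1
    · induction At e using TensorProduct.induction_on with
      | zero => simp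
      | add x y hx hy => simp only [TensorProduct.tmul_add, map_add, hx, hy]
      | tmul w e' =>
        simp [stepMul_tmul, stepL_tmul, jQ]
    · simp [stepL_tmul, jQ]
  | succ n ih =>
    have h : LinearMap.lTensor (Q × Ω[Q⁄k]) (Wn k Q E (n+1)) ∘ₗ
        LinearMap.lTensor (Q × Ω[Q⁄k]) (Phi k Q E At n)
        = LinearMap.lTensor (Q × Ω[Q⁄k]) (opT k Q E At + 1) ∘ₗ
          LinearMap.lTensor (Q × Ω[Q⁄k]) (Wn k Q E n) := by
      rw [← LinearMap.lTensor_comp, ih, LinearMap.lTensor_comp]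
    have h2 : stepL k Q E ∘ₗ LinearMap.lTensor (Q × Ω[Q⁄k]) (opT k Q E At + 1)
        = (opT k Q E At + 1) ∘ₗ stepL k Q E := by
      rw [LinearMap.lTensor_add, LinearMap.comp_add, opT_stepL, LinearMap.add_comp,
        Module.End.one_eq_id, LinearMap.lTensor_id, LinearMap.comp_id, LinearMap.id_comp]
    change stepL k Q E ∘ₗ (LinearMap.lTensor (Q × Ω[Q⁄k]) (Wn k Q E (n+1)) ∘ₗ
        LinearMap.lTensor (Q × Ω[Q⁄k]) (Phi k Q E At n)) = (opT k Q E At + 1) ∘ₗ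
        (stepL k Q E ∘ₗ LinearMap.lTensor (Q × Ω[Q⁄k]) (Wn k Q E n))
    rw [h, ← LinearMap.comp_assoc, h2, LinearMap.comp_assoc]

theorem Wn_psi (E : Type u) [AddCommGroup E] [Module Q E]
    (At : E →ₗ[Q] Ω[Q⁄k] ⊗[Q] E) (n : ℕ) :
    Wn k Q E n ∘ₗ psiTw k Q E At n = ((opT k Q E At + 1) ^ n) ∘ₗ
      TensorProduct.mk Q (ExteriorAlgebra Q (Ω[Q⁄k])) E 1 := by
  induction n with
  | zero => rfl
  | succ n ih =>
    rw [pow_succ', Module.End.mul_eq_comp, LinearMap.comp_assoc, ← ih,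
      ← LinearMap.comp_assoc, ← Wn_Phi, LinearMap.comp_assoc]
    rfl

theorem atIter_eq (E : Type u) [AddCommGroup E] [Module Q E]
    (At : E →ₗ[Q] Ω[Q⁄k] ⊗[Q] E) (n : ℕ) :
    atIter k Q E At n = ((opT k Q E At) ^ n) ∘ₗ
      TensorProduct.mk Q (ExteriorAlgebra Q (Ω[Q⁄k])) E 1 := by
  induction n with
  | zero => rfl
  | succ n ih =>
    rw [pow_succ', Module.End.mul_eq_comp, LinearMap.comp_assoc, ← ih]
    rfl

theorem phi_n_eq_sum_binomial_atiyah_powers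
    (E₀ E₁ : Type u) [AddCommGroup E₀] [Module Q E₀] [AddCommGroup E₁] [Module Q E₁]
    [Module.Finite Q E₀] [Module.Projective Q E₀]
    [Module.Finite Q E₁] [Module.Projective Q E₁]
    (f : Q) (A : E₁ →ₗ[Q] E₀) (B : E₀ →ₗ[Q] E₁)
    (hAB : ∀ y : E₀, A (B y) = f • y) (hBA : ∀ x : E₁, B (A x) = f • x)
    (na0 : Conn k Q E₀) (na1 : Conn k Q E₁)
    (At₁ : E₁ →ₗ[Q] Ω[Q⁄k] ⊗[Q] E₀) (At₀ : E₀ →ₗ[Q] Ω[Q⁄k] ⊗[Q] E₁)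
    (hAt₁ : ∀ x, At₁ x = na0.toFun (A x) - (LinearMap.lTensor (Ω[Q⁄k]) A) (na1.toFun x))
    (hAt₀ : ∀ y, At₀ y = na1.toFun (B y) - (LinearMap.lTensor (Ω[Q⁄k]) B) (na0.toFun y))
    -- the total Atiyah class on the underlying module E = E₀ ⊕ E₁
    (At : (E₀ × E₁) →ₗ[Q] Ω[Q⁄k] ⊗[Q] (E₀ × E₁))
    (hAt : At = (LinearMap.lTensor (Ω[Q⁄k]) (LinearMap.inr Q E₀ E₁)) ∘ₗ At₀ ∘ₗ
          LinearMap.fst Q E₀ E₁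
        + (LinearMap.lTensor (Ω[Q⁄k]) (LinearMap.inl Q E₀ E₁)) ∘ₗ At₁ ∘ₗ
          LinearMap.snd Q E₀ E₁)
    (n : ℕ) :
    Wn k Q (E₀ × E₁) n ∘ₗ psiTw k Q (E₀ × E₁) At n
      = ∑ i ∈ Finset.range (n + 1), (n.choose i) • atIter k Q (E₀ × E₁) At i := by
  rw [Wn_psi, (Commute.one_right (opT k Q (E₀ × E₁) At)).add_pow]
  apply LinearMap.ext
  intro e
  simp only [LinearMap.comp_apply, LinearMap.sum_apply, LinearMap.smul_apply, atIter_eq]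
  refine Finset.sum_congr rfl fun i _ => ?_
  rw [one_pow, mul_one, ← nsmul_eq_mul', LinearMap.smul_apply]
end

section
/- Let E and E′ be matrix factorizations of f ∈ Q with chosen connections, and let β : E′ → E be a strict morphism. Then for every n ≥ 1 the strict morphisms φ̃ⁿ_E ∘ β and (1^{⊗n} ⊗ β) ∘ φ̃ⁿ_{E′} from E′ to (Q →^{df∧} Ω¹)^{⊗n} ⊗_mf E are homotopic, where φ̃ⁿ denotes the n-fold iterate of the strict morphism φ̃ = (id, At) (i.e. the composite φ̃^{(n)}∘⋯∘φ̃^{(1)} with φ̃^{(i)} = 1^{⊗(i−1)} ⊗ φ̃). -/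
/-!
STATEMENT 12: For matrix factorizations E, E′ of f with chosen connections and a strict
morphism β : E′ → E, the strict morphisms φ̃ⁿ_E ∘ β and (1^{⊗n} ⊗ β) ∘ φ̃ⁿ_{E′} from E′ to
(Q →^{df∧} Ω¹)^{⊗n} ⊗_mf E are homotopic for every n ≥ 1.

The n-th stage (Q →^{df∧} Ω¹)^{⊗n} ⊗_mf E is realized by the tower `Tw 0 = E`,
`Tw (i+1) = (Q ⊕ Ω¹) ⊗ Tw i`, with its matrix-factorization differential δ and parity
involution ε built recursively from those of the folded two-term complex (Q → Ω¹)
(namely d(q,ω) = (0, q·df), ε(q,ω) = (q,−ω)) and those of E.  A homotopy between two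
strict morphisms is an odd Q-linear map h with δ∘h + h∘d = (difference).
-/

open TensorProduct

universe u
variable (k Q : Type u) [CommRing k] [CommRing Q] [Algebra k Q]

/-- The differential of the folded two-term complex `(Q →^{df∧} Ω¹)`. -/
noncomputable def dTwo (f : Q) : (Q × Ω[Q⁄k]) →ₗ[Q] (Q × Ω[Q⁄k]) :=
  LinearMap.prod 0
    ((LinearMap.toSpanSingleton Q (Ω[Q⁄k]) (KaehlerDifferential.D k Q f)) ∘ₗ
      LinearMap.fst Q Q (Ω[Q⁄k]))

/-- The parity involution of the folded two-term complex. -/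
noncomputable def eTwo : (Q × Ω[Q⁄k]) →ₗ[Q] (Q × Ω[Q⁄k]) :=
  LinearMap.prodMap LinearMap.id (-LinearMap.id)

/-- The matrix-factorization differential of the tower. -/
noncomputable def deltaTw (E : Type u) [AddCommGroup E] [Module Q E] (f : Q)
    (dE : E →ₗ[Q] E) (eE : E →ₗ[Q] E) :
    ∀ i, (Tw k Q E i) →ₗ[Q] (Tw k Q E i)
  | 0 => dE
  | (i+1) => TensorProduct.map (dTwo k Q f) LinearMap.id
      + TensorProduct.map (eTwo k Q) (deltaTw E f dE eE i)

/-- The parity involution of the tower. -/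
noncomputable def epsTw (E : Type u) [AddCommGroup E] [Module Q E] (eE : E →ₗ[Q] E) :
    ∀ i, (Tw k Q E i) →ₗ[Q] (Tw k Q E i)
  | 0 => eE
  | (i+1) => TensorProduct.map (eTwo k Q) (epsTw E eE i)

/-- `1^{⊗ n} ⊗ β`. -/
noncomputable def extMap (E F : Type u) [AddCommGroup E] [Module Q E]
    [AddCommGroup F] [Module Q F] (β : F →ₗ[Q] E) :
    ∀ i, (Tw k Q F i) →ₗ[Q] (Tw k Q E i)
  | 0 => β
  | (i+1) => LinearMap.lTensor (Q × Ω[Q⁄k]) (extMap E F β i)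

section Helpers

theorem dTwo_eTwo (f : Q) : dTwo k Q f ∘ₗ eTwo k Q = dTwo k Q f := by
  ext <;> simp [dTwo, eTwo]

theorem eTwo_dTwo (f : Q) : eTwo k Q ∘ₗ dTwo k Q f = - dTwo k Q f := by
  ext <;> simp [dTwo, eTwo]

theorem eTwo_eTwo : eTwo k Q ∘ₗ eTwo k Q = LinearMap.id := by
  ext <;> simp [eTwo]

theorem step_strict {M N : Type u} [AddCommGroup M] [Module Q M] [AddCommGroup N] [Module Q N]
    (f : Q) (δM : M →ₗ[Q] M) (δN : N →ₗ[Q] N) (Φ : M →ₗ[Q] N) (h : δN ∘ₗ Φ = Φ ∘ₗ δM) :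
    (TensorProduct.map (dTwo k Q f) LinearMap.id + TensorProduct.map (eTwo k Q) δN) ∘ₗ
        LinearMap.lTensor (Q × Ω[Q⁄k]) Φ
      = LinearMap.lTensor (Q × Ω[Q⁄k]) Φ ∘ₗ
        (TensorProduct.map (dTwo k Q f) LinearMap.id + TensorProduct.map (eTwo k Q) δM) := by
  apply TensorProduct.ext'
  intro a m
  have := LinearMap.congr_fun h m
  simp at this
  simp [this]

theorem step_even {M N : Type u} [AddCommGroup M] [Module Q M] [AddCommGroup N] [Module Q N]
    (εM : M →ₗ[Q] M) (εN : N →ₗ[Q] N) (Φ : M →ₗ[Q] N) (h : εN ∘ₗ Φ = Φ ∘ₗ εM) :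
    (TensorProduct.map (eTwo k Q) εN) ∘ₗ LinearMap.lTensor (Q × Ω[Q⁄k]) Φ
      = LinearMap.lTensor (Q × Ω[Q⁄k]) Φ ∘ₗ (TensorProduct.map (eTwo k Q) εM) := by
  apply TensorProduct.ext'
  intro a m
  have := LinearMap.congr_fun h m
  simp at this
  simp [this]

theorem step_odd {M N : Type u} [AddCommGroup M] [Module Q M] [AddCommGroup N] [Module Q N]
    (εM : M →ₗ[Q] M) (εN : N →ₗ[Q] N) (H : M →ₗ[Q] N) (h : H ∘ₗ εM = - εN ∘ₗ H) :
    TensorProduct.map (eTwo k Q) H ∘ₗ TensorProduct.map (eTwo k Q) εM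
      = - (TensorProduct.map (eTwo k Q) εN) ∘ₗ TensorProduct.map (eTwo k Q) H := by
  apply TensorProduct.ext'
  intro a m
  have := LinearMap.congr_fun h m
  simp at this
  simp [this, TensorProduct.tmul_neg]

theorem step_htpy {M N : Type u} [AddCommGroup M] [Module Q M] [AddCommGroup N] [Module Q N]
    (f : Q) (δM : M →ₗ[Q] M) (δN : N →ₗ[Q] N) (H P R : M →ₗ[Q] N)
    (h : δN ∘ₗ H + H ∘ₗ δM = P - R) :
    (TensorProduct.map (dTwo k Q f) LinearMap.id + TensorProduct.map (eTwo k Q) δN) ∘ₗ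
        TensorProduct.map (eTwo k Q) H
      + TensorProduct.map (eTwo k Q) H ∘ₗ
        (TensorProduct.map (dTwo k Q f) LinearMap.id + TensorProduct.map (eTwo k Q) δM)
      = LinearMap.lTensor (Q × Ω[Q⁄k]) P - LinearMap.lTensor (Q × Ω[Q⁄k]) R := by
  apply TensorProduct.ext'
  intro a m
  have h1 := LinearMap.congr_fun h m
  have h2 := LinearMap.congr_fun (dTwo_eTwo k Q f) a
  have h3 := LinearMap.congr_fun (eTwo_dTwo k Q f) a
  have h4 := LinearMap.congr_fun (eTwo_eTwo k Q) a
  simp at h1 h2 h3 h4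
  simp only [LinearMap.add_apply, LinearMap.comp_apply, LinearMap.sub_apply,
    TensorProduct.map_tmul, LinearMap.lTensor_tmul, LinearMap.id_apply, map_add, h2, h3, h4,
    ← TensorProduct.tmul_sub, ← h1, TensorProduct.neg_tmul, TensorProduct.tmul_add]
  abel

variable {k Q}
variable {E F : Type u} [AddCommGroup E] [Module Q E] [AddCommGroup F] [Module Q F]

theorem delta_inr (f : Q) (dE : E →ₗ[Q] E) (t : Ω[Q⁄k] ⊗[Q] E) :
    (TensorProduct.map (dTwo k Q f) LinearMap.id + TensorProduct.map (eTwo k Q) dE :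
        (Q × Ω[Q⁄k]) ⊗[Q] E →ₗ[Q] (Q × Ω[Q⁄k]) ⊗[Q] E)
      (TensorProduct.map (LinearMap.inr Q Q (Ω[Q⁄k])) LinearMap.id t)
    = - TensorProduct.map (LinearMap.inr Q Q (Ω[Q⁄k])) LinearMap.id
        (LinearMap.lTensor (Ω[Q⁄k]) dE t) := by
  induction t with
  | zero => simp
  | add x y hx hy => simp only [map_add, hx, hy, neg_add]
  | tmul w x =>
    have h1 : dTwo k Q f (0, w) = 0 := by simp [dTwo]
    have h2 : eTwo k Q (0, w) = - (0, w) := by simp [eTwo]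
    simp only [LinearMap.add_apply, TensorProduct.map_tmul, LinearMap.inr_apply, h1, h2,
      TensorProduct.neg_tmul, TensorProduct.zero_tmul, zero_add, LinearMap.lTensor_tmul,
      LinearMap.id_apply]

theorem eps_inr (eE : E →ₗ[Q] E) (t : Ω[Q⁄k] ⊗[Q] E) :
    (TensorProduct.map (eTwo k Q) eE)
      (TensorProduct.map (LinearMap.inr Q Q (Ω[Q⁄k])) LinearMap.id t)
    = - TensorProduct.map (LinearMap.inr Q Q (Ω[Q⁄k])) LinearMap.id
        (LinearMap.lTensor (Ω[Q⁄k]) eE t) := by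
  induction t with
  | zero => simp
  | add x y hx hy => simp only [map_add, hx, hy, neg_add]
  | tmul w x =>
    have h2 : eTwo k Q (0, w) = - (0, w) := by simp [eTwo]
    simp only [TensorProduct.map_tmul, LinearMap.inr_apply, h2,
      TensorProduct.neg_tmul, LinearMap.lTensor_tmul, LinearMap.id_apply]

theorem Conn.map_sub' (na : Conn k Q E) (x y : E) :
    na.toFun (x - y) = na.toFun x - na.toFun y := by
  have := na.map_add (x - y) y
  rw [sub_add_cancel] at this
  rw [this, add_sub_cancel_right]

theorem lT_comp {G : Type u} [AddCommGroup G] [Module Q G] (a : F →ₗ[Q] G) (b : E →ₗ[Q] F)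
    (t : Ω[Q⁄k] ⊗[Q] E) :
    LinearMap.lTensor (Ω[Q⁄k]) a (LinearMap.lTensor (Ω[Q⁄k]) b t)
      = LinearMap.lTensor (Ω[Q⁄k]) (a ∘ₗ b) t := by
  rw [LinearMap.lTensor_comp]; rfl

/-- `At ∘ d + (1 ⊗ d) ∘ At = df ⊗ -`. -/
theorem At_d (f : Q) (dE : E →ₗ[Q] E) (hd : ∀ x, dE (dE x) = f • x) (na : Conn k Q E)
    (At : E →ₗ[Q] Ω[Q⁄k] ⊗[Q] E)
    (hAt : ∀ x, At x = na.toFun (dE x) - LinearMap.lTensor (Ω[Q⁄k]) dE (na.toFun x)) (x : E) :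
    At (dE x) + LinearMap.lTensor (Ω[Q⁄k]) dE (At x)
      = KaehlerDifferential.D k Q f ⊗ₜ[Q] x := by
  have hdd : dE ∘ₗ dE = f • LinearMap.id := by ext x; simp [hd]
  rw [hAt, hAt, map_sub, lT_comp, hdd, hd, na.leibniz, LinearMap.lTensor_smul]
  simp

theorem Phi_strict (f : Q) (dE eE : E →ₗ[Q] E) (At : E →ₗ[Q] Ω[Q⁄k] ⊗[Q] E)
    (hAt : ∀ x, At (dE x) + LinearMap.lTensor (Ω[Q⁄k]) dE (At x)
      = KaehlerDifferential.D k Q f ⊗ₜ[Q] x) (n : ℕ) :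
    deltaTw k Q E f dE eE (n+1) ∘ₗ Phi k Q E At n
      = Phi k Q E At n ∘ₗ deltaTw k Q E f dE eE n := by
  induction n with
  | zero =>
    apply LinearMap.ext
    intro x
    change E at x
    change (TensorProduct.map (dTwo k Q f) LinearMap.id + TensorProduct.map (eTwo k Q) dE :
        (Q × Ω[Q⁄k]) ⊗[Q] E →ₗ[Q] (Q × Ω[Q⁄k]) ⊗[Q] E)
      (((1 : Q), (0 : Ω[Q⁄k])) ⊗ₜ[Q] x
        + TensorProduct.map (LinearMap.inr Q Q (Ω[Q⁄k])) LinearMap.id (At x))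
      = ((1 : Q), (0 : Ω[Q⁄k])) ⊗ₜ[Q] (dE x)
        + TensorProduct.map (LinearMap.inr Q Q (Ω[Q⁄k])) LinearMap.id (At (dE x))
    rw [map_add, delta_inr, eq_sub_of_add_eq (hAt x)]
    have h1 : dTwo k Q f (1, 0) = (0, KaehlerDifferential.D k Q f) := by simp [dTwo]
    have h2 : eTwo k Q (1, 0) = (1, 0) := by simp [eTwo]
    simp [h1, h2]
    abel
  | succ n ih => exact step_strict k Q f _ _ _ ih

theorem Phi_even (eE : E →ₗ[Q] E) (At : E →ₗ[Q] Ω[Q⁄k] ⊗[Q] E)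
    (hAt : ∀ x, At (eE x) = - LinearMap.lTensor (Ω[Q⁄k]) eE (At x)) (n : ℕ) :
    epsTw k Q E eE (n+1) ∘ₗ Phi k Q E At n = Phi k Q E At n ∘ₗ epsTw k Q E eE n := by
  induction n with
  | zero =>
    apply LinearMap.ext
    intro x
    change E at x
    change (TensorProduct.map (eTwo k Q) eE)
      (((1 : Q), (0 : Ω[Q⁄k])) ⊗ₜ[Q] x
        + TensorProduct.map (LinearMap.inr Q Q (Ω[Q⁄k])) LinearMap.id (At x))
      = ((1 : Q), (0 : Ω[Q⁄k])) ⊗ₜ[Q] (eE x)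
        + TensorProduct.map (LinearMap.inr Q Q (Ω[Q⁄k])) LinearMap.id (At (eE x))
    rw [map_add, eps_inr, hAt x]
    have h2 : eTwo k Q (1, 0) = (1, 0) := by simp [eTwo]
    simp [h2]
  | succ n ih => exact step_even k Q _ _ _ ih

theorem psi_strict (f : Q) (dE eE : E →ₗ[Q] E) (At : E →ₗ[Q] Ω[Q⁄k] ⊗[Q] E)
    (hAt : ∀ x, At (dE x) + LinearMap.lTensor (Ω[Q⁄k]) dE (At x)
      = KaehlerDifferential.D k Q f ⊗ₜ[Q] x) (n : ℕ) :
    deltaTw k Q E f dE eE n ∘ₗ psiTw k Q E At n = psiTw k Q E At n ∘ₗ dE := by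
  induction n with
  | zero => rfl
  | succ n ih =>
    rw [psiTw, ← LinearMap.comp_assoc, Phi_strict f dE eE At hAt, LinearMap.comp_assoc, ih,
      LinearMap.comp_assoc]

theorem psi_even (eE : E →ₗ[Q] E) (At : E →ₗ[Q] Ω[Q⁄k] ⊗[Q] E)
    (hAt : ∀ x, At (eE x) = - LinearMap.lTensor (Ω[Q⁄k]) eE (At x)) (n : ℕ) :
    epsTw k Q E eE n ∘ₗ psiTw k Q E At n = psiTw k Q E At n ∘ₗ eE := by
  induction n with
  | zero => rfl
  | succ n ih =>
    rw [psiTw, ← LinearMap.comp_assoc, Phi_even eE At hAt, LinearMap.comp_assoc, ih,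
      LinearMap.comp_assoc]

/-- `∇_E ∘ β - (1 ⊗ β) ∘ ∇_F`, which is `Q`-linear. -/
noncomputable def sigmaMap (na : Conn k Q E) (nb : Conn k Q F) (β : F →ₗ[Q] E) :
    F →ₗ[Q] Ω[Q⁄k] ⊗[Q] E where
  toFun x := na.toFun (β x) - LinearMap.lTensor (Ω[Q⁄k]) β (nb.toFun x)
  map_add' x y := by
    simp only [map_add, na.map_add, nb.map_add]
    abel
  map_smul' q x := by
    simp only [map_smul, na.leibniz, nb.leibniz, map_add, LinearMap.lTensor_tmul,
      RingHom.id_apply, smul_sub]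
    abel

theorem Phi_htpy (f : Q) (dE eE : E →ₗ[Q] E) (dF eF : F →ₗ[Q] F) (β : F →ₗ[Q] E)
    (AtE : E →ₗ[Q] Ω[Q⁄k] ⊗[Q] E) (AtF : F →ₗ[Q] Ω[Q⁄k] ⊗[Q] F)
    (σ : F →ₗ[Q] Ω[Q⁄k] ⊗[Q] E)
    (hσ : ∀ x, AtE (β x) - LinearMap.lTensor (Ω[Q⁄k]) β (AtF x)
      = σ (dF x) - LinearMap.lTensor (Ω[Q⁄k]) dE (σ x))
    (hσe : ∀ x, σ (eF x) = LinearMap.lTensor (Ω[Q⁄k]) eE (σ x)) (n : ℕ) :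
    ∃ H : Tw k Q F n →ₗ[Q] Tw k Q E (n+1),
      H ∘ₗ epsTw k Q F eF n = - epsTw k Q E eE (n+1) ∘ₗ H ∧
      deltaTw k Q E f dE eE (n+1) ∘ₗ H + H ∘ₗ deltaTw k Q F f dF eF n
        = Phi k Q E AtE n ∘ₗ extMap k Q E F β n - extMap k Q E F β (n+1) ∘ₗ Phi k Q F AtF n := by
  induction n with
  | zero =>
    refine ⟨(TensorProduct.map (LinearMap.inr Q Q (Ω[Q⁄k])) LinearMap.id) ∘ₗ σ, ?_, ?_⟩
    · apply LinearMap.ext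
      intro x
      change F at x
      change TensorProduct.map (LinearMap.inr Q Q (Ω[Q⁄k])) LinearMap.id (σ (eF x))
        = - (TensorProduct.map (eTwo k Q) eE)
          (TensorProduct.map (LinearMap.inr Q Q (Ω[Q⁄k])) LinearMap.id (σ x))
      rw [eps_inr, hσe, neg_neg]
    · apply LinearMap.ext
      intro x
      change F at x
      change (TensorProduct.map (dTwo k Q f) LinearMap.id + TensorProduct.map (eTwo k Q) dE :
        (Q × Ω[Q⁄k]) ⊗[Q] E →ₗ[Q] (Q × Ω[Q⁄k]) ⊗[Q] E)
          (TensorProduct.map (LinearMap.inr Q Q (Ω[Q⁄k])) LinearMap.id (σ x))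
        + TensorProduct.map (LinearMap.inr Q Q (Ω[Q⁄k])) LinearMap.id (σ (dF x))
        = (((1 : Q), (0 : Ω[Q⁄k])) ⊗ₜ[Q] (β x)
          + TensorProduct.map (LinearMap.inr Q Q (Ω[Q⁄k])) LinearMap.id (AtE (β x)))
          - LinearMap.lTensor (Q × Ω[Q⁄k]) β (((1 : Q), (0 : Ω[Q⁄k])) ⊗ₜ[Q] x
          + TensorProduct.map (LinearMap.inr Q Q (Ω[Q⁄k])) LinearMap.id (AtF x))
      have hc : ∀ t : Ω[Q⁄k] ⊗[Q] F, LinearMap.lTensor (Q × Ω[Q⁄k]) β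
          (TensorProduct.map (LinearMap.inr Q Q (Ω[Q⁄k])) LinearMap.id t)
          = TensorProduct.map (LinearMap.inr Q Q (Ω[Q⁄k])) LinearMap.id
            (LinearMap.lTensor (Ω[Q⁄k]) β t) := by
        intro t
        induction t with
        | zero => simp
        | add x y hx hy => simp only [map_add, hx, hy]
        | tmul w x => simp
      rw [delta_inr, map_add, hc, eq_add_of_sub_eq (hσ x), LinearMap.lTensor_tmul]
      simp only [map_add, map_sub]
      abel
  | succ n ih =>
    obtain ⟨H, h1, h2⟩ := ih
    refine ⟨TensorProduct.map (eTwo k Q) H, step_odd k Q _ _ H h1, ?_⟩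
    refine (step_htpy k Q f _ _ H _ _ h2).trans ?_
    rw [LinearMap.lTensor_comp, LinearMap.lTensor_comp]
    rfl

theorem psi_htpy (f : Q) (dE eE : E →ₗ[Q] E) (dF eF : F →ₗ[Q] F) (β : F →ₗ[Q] E)
    (AtE : E →ₗ[Q] Ω[Q⁄k] ⊗[Q] E) (AtF : F →ₗ[Q] Ω[Q⁄k] ⊗[Q] F)
    (hAtE : ∀ x, AtE (dE x) + LinearMap.lTensor (Ω[Q⁄k]) dE (AtE x)
      = KaehlerDifferential.D k Q f ⊗ₜ[Q] x)
    (hAtEe : ∀ x, AtE (eE x) = - LinearMap.lTensor (Ω[Q⁄k]) eE (AtE x))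
    (hAtF : ∀ x, AtF (dF x) + LinearMap.lTensor (Ω[Q⁄k]) dF (AtF x)
      = KaehlerDifferential.D k Q f ⊗ₜ[Q] x)
    (hAtFe : ∀ x, AtF (eF x) = - LinearMap.lTensor (Ω[Q⁄k]) eF (AtF x))
    (σ : F →ₗ[Q] Ω[Q⁄k] ⊗[Q] E)
    (hσ : ∀ x, AtE (β x) - LinearMap.lTensor (Ω[Q⁄k]) β (AtF x)
      = σ (dF x) - LinearMap.lTensor (Ω[Q⁄k]) dE (σ x))
    (hσe : ∀ x, σ (eF x) = LinearMap.lTensor (Ω[Q⁄k]) eE (σ x)) (n : ℕ) :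
    ∃ h : F →ₗ[Q] Tw k Q E n,
      h ∘ₗ eF = - epsTw k Q E eE n ∘ₗ h ∧
      deltaTw k Q E f dE eE n ∘ₗ h + h ∘ₗ dF
        = psiTw k Q E AtE n ∘ₗ β - extMap k Q E F β n ∘ₗ psiTw k Q F AtF n := by
  induction n with
  | zero =>
    refine ⟨0, by simp, ?_⟩
    rw [LinearMap.comp_zero, LinearMap.zero_comp, add_zero]
    exact (sub_self (β : F →ₗ[Q] E)).symm
  | succ n ih =>
    obtain ⟨h, h1, h2⟩ := ih
    obtain ⟨H, H1, H2⟩ := Phi_htpy f dE eE dF eF β AtE AtF σ hσ hσe n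
    have sE := Phi_strict f dE eE AtE hAtE n
    have eEv := Phi_even eE AtE hAtEe n
    have sF := psi_strict f dF eF AtF hAtF n
    have eFv := psi_even eF AtF hAtFe n
    refine ⟨Phi k Q E AtE n ∘ₗ h + H ∘ₗ psiTw k Q F AtF n, ?_, ?_⟩
    · apply LinearMap.ext
      intro x
      have a1 := LinearMap.congr_fun h1 x
      have a2 := LinearMap.congr_fun H1 (psiTw k Q F AtF n x)
      have a3 := LinearMap.congr_fun eEv (h x)
      have a4 := LinearMap.congr_fun eFv x
      simp only [LinearMap.comp_apply, LinearMap.neg_apply, LinearMap.add_apply, map_add]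
        at a1 a2 a3 a4 ⊢
      rw [a1, ← a4, a2, a3, map_neg, neg_add]
    · apply LinearMap.ext
      intro x
      have a1 := congrArg (Phi k Q E AtE n) (LinearMap.congr_fun h2 x)
      have a2 := LinearMap.congr_fun H2 (psiTw k Q F AtF n x)
      have a3 := LinearMap.congr_fun sE (h x)
      have a4 := LinearMap.congr_fun sF x
      simp only [LinearMap.comp_apply, LinearMap.sub_apply, LinearMap.add_apply, map_add,
        map_sub, psiTw] at a1 a2 a3 a4 ⊢
      rw [a3, ← a4, add_add_add_comm, a1, a2]
      abel

/-- The direct sum connection on `P ≅ E ⊕ F`. -/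
noncomputable def Conn.sum {P : Type u} [AddCommGroup P] [Module Q P]
    (na : Conn k Q E) (nb : Conn k Q F) (i : E →ₗ[Q] P) (j : F →ₗ[Q] P)
    (p : P →ₗ[Q] E) (r : P →ₗ[Q] F) (hx : ∀ x, i (p x) + j (r x) = x) : Conn k Q P where
  toFun x := LinearMap.lTensor (Ω[Q⁄k]) i (na.toFun (p x))
    + LinearMap.lTensor (Ω[Q⁄k]) j (nb.toFun (r x))
  map_add x y := by
    simp only [na.map_add, nb.map_add, _root_.map_add]
    abel
  leibniz q x := by
    simp only [na.leibniz, nb.leibniz, _root_.map_add, map_smul, LinearMap.lTensor_tmul, smul_add]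
    conv_rhs => rw [← hx x, TensorProduct.tmul_add]
    simp only [hx]
    abel

theorem Conn.neg' (na : Conn k Q E) (x : E) : na.toFun (-x) = - na.toFun x := by
  have := na.leibniz (-1) x
  simpa using this

theorem Conn.sum_even {P : Type u} [AddCommGroup P] [Module Q P]
    (na : Conn k Q E) (nb : Conn k Q F) (i : E →ₗ[Q] P) (j : F →ₗ[Q] P)
    (p : P →ₗ[Q] E) (r : P →ₗ[Q] F) (hx : ∀ x, i (p x) + j (r x) = x)
    (eP : P →ₗ[Q] P) (h1 : eP ∘ₗ i = i) (h2 : eP ∘ₗ j = - j)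
    (h3 : ∀ x, p (eP x) = p x) (h4 : ∀ x, r (eP x) = - r x) (x : P) :
    (na.sum nb i j p r hx).toFun (eP x)
    = LinearMap.lTensor (Ω[Q⁄k]) eP ((na.sum nb i j p r hx).toFun x) := by
  simp only [Conn.sum, _root_.map_add, lT_comp, h1, h2, h3, h4]
  simp [Conn.neg', LinearMap.lTensor_neg]

theorem At_total {P : Type u} [AddCommGroup P] [Module Q P]
    (na : Conn k Q E) (nb : Conn k Q F) (i : E →ₗ[Q] P) (j : F →ₗ[Q] P)
    (p : P →ₗ[Q] E) (r : P →ₗ[Q] F) (hx : ∀ x, i (p x) + j (r x) = x)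
    (A : F →ₗ[Q] E) (B : E →ₗ[Q] F)
    (At₁ : F →ₗ[Q] Ω[Q⁄k] ⊗[Q] E) (At₀ : E →ₗ[Q] Ω[Q⁄k] ⊗[Q] F)
    (hAt₁ : ∀ e, At₁ e = na.toFun (A e) - (LinearMap.lTensor (Ω[Q⁄k]) A) (nb.toFun e))
    (hAt₀ : ∀ e, At₀ e = nb.toFun (B e) - (LinearMap.lTensor (Ω[Q⁄k]) B) (na.toFun e))
    (dE : P →ₗ[Q] P) (h1 : dE ∘ₗ i = j ∘ₗ B) (h2 : dE ∘ₗ j = i ∘ₗ A)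
    (h3 : ∀ x, p (dE x) = A (r x)) (h4 : ∀ x, r (dE x) = B (p x))
    (AtP : P →ₗ[Q] Ω[Q⁄k] ⊗[Q] P)
    (hAtP : AtP = (LinearMap.lTensor (Ω[Q⁄k]) j) ∘ₗ At₀ ∘ₗ p
        + (LinearMap.lTensor (Ω[Q⁄k]) i) ∘ₗ At₁ ∘ₗ r) (x : P) :
    AtP x = (na.sum nb i j p r hx).toFun (dE x)
      - LinearMap.lTensor (Ω[Q⁄k]) dE ((na.sum nb i j p r hx).toFun x) := by
  subst hAtP
  simp only [Conn.sum, map_add, lT_comp, h1, h2, h3, h4]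
  simp only [← lT_comp]
  simp only [LinearMap.add_apply, LinearMap.comp_apply, hAt₁, hAt₀, map_sub]
  abel

theorem At_odd (na : Conn k Q E) (dE eE : E →ₗ[Q] E) (hde : dE ∘ₗ eE = - eE ∘ₗ dE)
    (hna : ∀ x, na.toFun (eE x) = LinearMap.lTensor (Ω[Q⁄k]) eE (na.toFun x))
    (At : E →ₗ[Q] Ω[Q⁄k] ⊗[Q] E)
    (hAt : ∀ x, At x = na.toFun (dE x) - LinearMap.lTensor (Ω[Q⁄k]) dE (na.toFun x)) (x : E) :
    At (eE x) = - LinearMap.lTensor (Ω[Q⁄k]) eE (At x) := by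
  have h := LinearMap.congr_fun hde x
  simp only [LinearMap.comp_apply, LinearMap.neg_apply] at h
  rw [hAt, hAt, h, hna, lT_comp, hde, map_sub, lT_comp, Conn.neg', hna,
    LinearMap.lTensor_neg, LinearMap.neg_apply]
  abel

theorem sigma_htpy (na : Conn k Q E) (nb : Conn k Q F) (dE : E →ₗ[Q] E) (dF : F →ₗ[Q] F)
    (β : F →ₗ[Q] E) (hβd : dE ∘ₗ β = β ∘ₗ dF)
    (AtE : E →ₗ[Q] Ω[Q⁄k] ⊗[Q] E) (AtF : F →ₗ[Q] Ω[Q⁄k] ⊗[Q] F)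
    (hE : ∀ x, AtE x = na.toFun (dE x) - LinearMap.lTensor (Ω[Q⁄k]) dE (na.toFun x))
    (hF : ∀ x, AtF x = nb.toFun (dF x) - LinearMap.lTensor (Ω[Q⁄k]) dF (nb.toFun x)) (x : F) :
    AtE (β x) - LinearMap.lTensor (Ω[Q⁄k]) β (AtF x)
      = sigmaMap na nb β (dF x) - LinearMap.lTensor (Ω[Q⁄k]) dE (sigmaMap na nb β x) := by
  have b := LinearMap.congr_fun hβd x
  simp only [LinearMap.comp_apply] at b
  simp only [sigmaMap, LinearMap.coe_mk, AddHom.coe_mk, hE, hF, map_sub, lT_comp, hβd, b]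
  abel

theorem sigma_even (na : Conn k Q E) (nb : Conn k Q F) (eE : E →ₗ[Q] E) (eF : F →ₗ[Q] F)
    (β : F →ₗ[Q] E) (hβe : β ∘ₗ eF = eE ∘ₗ β)
    (hE : ∀ x, na.toFun (eE x) = LinearMap.lTensor (Ω[Q⁄k]) eE (na.toFun x))
    (hF : ∀ x, nb.toFun (eF x) = LinearMap.lTensor (Ω[Q⁄k]) eF (nb.toFun x)) (x : F) :
    sigmaMap na nb β (eF x) = LinearMap.lTensor (Ω[Q⁄k]) eE (sigmaMap na nb β x) := by
  have b := LinearMap.congr_fun hβe x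
  simp only [LinearMap.comp_apply] at b
  simp only [sigmaMap, LinearMap.coe_mk, AddHom.coe_mk, map_sub, lT_comp, b, hE, hF, hβe]

end Helpers

theorem phi_tilde_n_commutes_with_strict_morphisms_up_to_homotopy
    (E₀ E₁ F₀ F₁ : Type u)
    [AddCommGroup E₀] [Module Q E₀] [AddCommGroup E₁] [Module Q E₁]
    [AddCommGroup F₀] [Module Q F₀] [AddCommGroup F₁] [Module Q F₁]
    [Module.Finite Q E₀] [Module.Projective Q E₀]
    [Module.Finite Q E₁] [Module.Projective Q E₁]
    [Module.Finite Q F₀] [Module.Projective Q F₀]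
    [Module.Finite Q F₁] [Module.Projective Q F₁]
    (f : Q)
    -- the matrix factorization E = (E₁ -A→ E₀ -B→ E₁)
    (A : E₁ →ₗ[Q] E₀) (B : E₀ →ₗ[Q] E₁)
    (hAB : ∀ y, A (B y) = f • y) (hBA : ∀ x, B (A x) = f • x)
    -- the matrix factorization E′ = (F₁ -C→ F₀ -D→ F₁)
    (C : F₁ →ₗ[Q] F₀) (D : F₀ →ₗ[Q] F₁)
    (hCD : ∀ y, C (D y) = f • y) (hDC : ∀ x, D (C x) = f • x)
    -- a strict morphism β : E′ → E
    (β₀ : F₀ →ₗ[Q] E₀) (β₁ : F₁ →ₗ[Q] E₁)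
    (hβ : A ∘ₗ β₁ = β₀ ∘ₗ C ∧ B ∘ₗ β₀ = β₁ ∘ₗ D)
    -- connections and Atiyah classes
    (na0 : Conn k Q E₀) (na1 : Conn k Q E₁) (nb0 : Conn k Q F₀) (nb1 : Conn k Q F₁)
    (At₁ : E₁ →ₗ[Q] Ω[Q⁄k] ⊗[Q] E₀) (At₀ : E₀ →ₗ[Q] Ω[Q⁄k] ⊗[Q] E₁)
    (hAt₁ : ∀ e, At₁ e = na0.toFun (A e) - (LinearMap.lTensor (Ω[Q⁄k]) A) (na1.toFun e))
    (hAt₀ : ∀ e, At₀ e = na1.toFun (B e) - (LinearMap.lTensor (Ω[Q⁄k]) B) (na0.toFun e))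
    (AtE : (E₀ × E₁) →ₗ[Q] Ω[Q⁄k] ⊗[Q] (E₀ × E₁))
    (hAtE : AtE = (LinearMap.lTensor (Ω[Q⁄k]) (LinearMap.inr Q E₀ E₁)) ∘ₗ At₀ ∘ₗ
          LinearMap.fst Q E₀ E₁
        + (LinearMap.lTensor (Ω[Q⁄k]) (LinearMap.inl Q E₀ E₁)) ∘ₗ At₁ ∘ₗ
          LinearMap.snd Q E₀ E₁)
    (Bt₁ : F₁ →ₗ[Q] Ω[Q⁄k] ⊗[Q] F₀) (Bt₀ : F₀ →ₗ[Q] Ω[Q⁄k] ⊗[Q] F₁)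
    (hBt₁ : ∀ e, Bt₁ e = nb0.toFun (C e) - (LinearMap.lTensor (Ω[Q⁄k]) C) (nb1.toFun e))
    (hBt₀ : ∀ e, Bt₀ e = nb1.toFun (D e) - (LinearMap.lTensor (Ω[Q⁄k]) D) (nb0.toFun e))
    (AtF : (F₀ × F₁) →ₗ[Q] Ω[Q⁄k] ⊗[Q] (F₀ × F₁))
    (hAtF : AtF = (LinearMap.lTensor (Ω[Q⁄k]) (LinearMap.inr Q F₀ F₁)) ∘ₗ Bt₀ ∘ₗ
          LinearMap.fst Q F₀ F₁
        + (LinearMap.lTensor (Ω[Q⁄k]) (LinearMap.inl Q F₀ F₁)) ∘ₗ Bt₁ ∘ₗ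
          LinearMap.snd Q F₀ F₁)
    (n : ℕ) (hn : 1 ≤ n) :
    -- the total differentials, involutions and β on the underlying ℤ/2-graded modules
    ∀ (dE : (E₀ × E₁) →ₗ[Q] (E₀ × E₁)) (dF : (F₀ × F₁) →ₗ[Q] (F₀ × F₁))
      (βt : (F₀ × F₁) →ₗ[Q] (E₀ × E₁)),
      dE = LinearMap.prod (A ∘ₗ LinearMap.snd Q E₀ E₁) (B ∘ₗ LinearMap.fst Q E₀ E₁) →
      dF = LinearMap.prod (C ∘ₗ LinearMap.snd Q F₀ F₁) (D ∘ₗ LinearMap.fst Q F₀ F₁) →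
      βt = LinearMap.prodMap β₀ β₁ →
      -- there is a homotopy h between φ̃ⁿ_E ∘ β and (1^{⊗n} ⊗ β) ∘ φ̃ⁿ_{E′} :
      ∃ h : (F₀ × F₁) →ₗ[Q] Tw k Q (E₀ × E₁) n,
        -- h is odd
        (h ∘ₗ (LinearMap.prodMap LinearMap.id (-LinearMap.id))
          = - (epsTw k Q (E₀ × E₁) (LinearMap.prodMap LinearMap.id (-LinearMap.id)) n) ∘ₗ h) ∧
        -- and realizes the homotopy
        (deltaTw k Q (E₀ × E₁) f dE (LinearMap.prodMap LinearMap.id (-LinearMap.id)) n ∘ₗ h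
            + h ∘ₗ dF
          = psiTw k Q (E₀ × E₁) AtE n ∘ₗ βt
            - extMap k Q (E₀ × E₁) (F₀ × F₁) βt n ∘ₗ psiTw k Q (F₀ × F₁) AtF n) := by
  intro dE dF βt hdE hdF hβt
  have hxE : ∀ x : E₀ × E₁, LinearMap.inl Q E₀ E₁ (LinearMap.fst Q E₀ E₁ x)
      + LinearMap.inr Q E₀ E₁ (LinearMap.snd Q E₀ E₁ x) = x := by simp
  have hE := At_total na0 na1 (LinearMap.inl Q E₀ E₁) (LinearMap.inr Q E₀ E₁)
    (LinearMap.fst Q E₀ E₁) (LinearMap.snd Q E₀ E₁) hxE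
    A B At₁ At₀ hAt₁ hAt₀ dE (by subst hdE; ext <;> simp)
    (by subst hdE; ext <;> simp) (by subst hdE; simp) (by subst hdE; simp) AtE hAtE
  have heE := Conn.sum_even na0 na1 (LinearMap.inl Q E₀ E₁) (LinearMap.inr Q E₀ E₁)
    (LinearMap.fst Q E₀ E₁) (LinearMap.snd Q E₀ E₁) hxE
    (LinearMap.prodMap LinearMap.id (-LinearMap.id))
    (by ext <;> simp) (by ext <;> simp) (by simp) (by simp)
  have hxF : ∀ x : F₀ × F₁, LinearMap.inl Q F₀ F₁ (LinearMap.fst Q F₀ F₁ x)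
      + LinearMap.inr Q F₀ F₁ (LinearMap.snd Q F₀ F₁ x) = x := by simp
  have hF := At_total nb0 nb1 (LinearMap.inl Q F₀ F₁) (LinearMap.inr Q F₀ F₁)
    (LinearMap.fst Q F₀ F₁) (LinearMap.snd Q F₀ F₁) hxF
    C D Bt₁ Bt₀ hBt₁ hBt₀ dF (by subst hdF; ext <;> simp)
    (by subst hdF; ext <;> simp) (by subst hdF; simp) (by subst hdF; simp) AtF hAtF
  have heF := Conn.sum_even nb0 nb1 (LinearMap.inl Q F₀ F₁) (LinearMap.inr Q F₀ F₁)
    (LinearMap.fst Q F₀ F₁) (LinearMap.snd Q F₀ F₁) hxF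
    (LinearMap.prodMap LinearMap.id (-LinearMap.id))
    (by ext <;> simp) (by ext <;> simp) (by simp) (by simp)
  have hdE2 : ∀ x, dE (dE x) = f • x := by
    intro x; subst hdE; ext <;> simp [hAB, hBA]
  have hdF2 : ∀ x, dF (dF x) = f • x := by
    intro x; subst hdF; ext <;> simp [hCD, hDC]
  have hdEe : dE ∘ₗ (LinearMap.prodMap LinearMap.id (-LinearMap.id))
      = - (LinearMap.prodMap LinearMap.id (-LinearMap.id)) ∘ₗ dE := by
    subst hdE; ext <;> simp
  have hdFe : dF ∘ₗ (LinearMap.prodMap LinearMap.id (-LinearMap.id))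
      = - (LinearMap.prodMap LinearMap.id (-LinearMap.id)) ∘ₗ dF := by
    subst hdF; ext <;> simp
  have hβd : dE ∘ₗ βt = βt ∘ₗ dF := by
    apply LinearMap.ext
    intro x
    have b1 := LinearMap.congr_fun hβ.1 x.2
    have b2 := LinearMap.congr_fun hβ.2 x.1
    simp only [LinearMap.comp_apply] at b1 b2
    subst hdE hdF hβt
    ext <;> simp [b1, b2]
  have hβe : βt ∘ₗ (LinearMap.prodMap LinearMap.id (-LinearMap.id))
      = (LinearMap.prodMap LinearMap.id (-LinearMap.id)) ∘ₗ βt := by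
    subst hβt; ext <;> simp
  refine psi_htpy f dE _ dF _ βt AtE AtF (At_d f dE hdE2 _ AtE hE)
    (At_odd _ dE _ hdEe heE AtE hE) (At_d f dF hdF2 _ AtF hF)
    (At_odd _ dF _ hdFe heF AtF hF)
    (sigmaMap _ _ βt) (sigma_htpy _ _ dE dF βt hβd AtE AtF hE hF)
    (sigma_even _ _ _ _ βt hβe heE heF) n
end

section
/- Let k be a commutative ring containing ℚ, Q a smooth k-algebra of relative dimension n, and f ∈ Q. Let E and E′ be matrix factorizations of f that are homotopy equivalent, i.e. there are strict morphisms α : E → E′ and β : E′ → E with α∘β and β∘α homotopic to the respective identities. Then for any choices of connections on E and on E′, the difference Σ_{i=0}^{n} (1/i!)·str(Atⁱ_E) − Σ_{i=0}^{n} (1/i!)·str(Atⁱ_{E′}) lies in the image of df∧ : ⊕_i Ω^{i−1} → ⊕_i Ωⁱ; that is, ch(E) = ch(E′) in H₀((Ω•, df, n)_{ℤ/2}). -/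
/-!
STATEMENT 13: Let k ⊇ ℚ and Q a smooth k-algebra of relative dimension n (recorded by
smoothness together with the vanishing of products of n+1 one-forms). If E and E′ are
homotopy equivalent matrix factorizations of f ∈ Q, then for any choices of connections
the difference ch(E) − ch(E′) = Σ_{i=0}^{n} (1/i!)(str(Atⁱ_E) − str(Atⁱ_{E′})) lies in the
image of df∧, i.e. ch(E) = ch(E′) in H₀((Ω•, df, n)_{ℤ/2}).
-/

open TensorProduct

universe u
variable (k Q : Type u) [CommRing k] [CommRing Q] [Algebra k Q]

/-- Trace, with coefficients in a module `N`, of a map `E → N ⊗ E` on a f.g. projective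
module `E`, computed via a presentation of `E` as a retract of `Fin r → Q`. -/
noncomputable def trC {N E : Type u} [AddCommGroup N] [Module Q N]
    [AddCommGroup E] [Module Q E] {r : ℕ}
    (p : (Fin r → Q) →ₗ[Q] E) (s : E →ₗ[Q] (Fin r → Q))
    (g : E →ₗ[Q] N ⊗[Q] E) : N :=
  ∑ j : Fin r, (TensorProduct.rid Q N)
    ((LinearMap.lTensor N (LinearMap.proj j))
      ((LinearMap.lTensor N s) (g (p (Pi.single j 1)))))

/-- The supertrace of a map `E₀ ⊕ E₁ → N ⊗ (E₀ ⊕ E₁)`: the trace of its `(0,0)`-component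
minus the trace of its `(1,1)`-component. -/
noncomputable def strT {N E₀ E₁ : Type u} [AddCommGroup N] [Module Q N]
    [AddCommGroup E₀] [Module Q E₀] [AddCommGroup E₁] [Module Q E₁]
    {r₀ r₁ : ℕ} (p₀ : (Fin r₀ → Q) →ₗ[Q] E₀) (s₀ : E₀ →ₗ[Q] (Fin r₀ → Q))
    (p₁ : (Fin r₁ → Q) →ₗ[Q] E₁) (s₁ : E₁ →ₗ[Q] (Fin r₁ → Q))
    (T : (E₀ × E₁) →ₗ[Q] N ⊗[Q] (E₀ × E₁)) : N :=
  trC Q p₀ s₀ ((LinearMap.lTensor N (LinearMap.fst Q E₀ E₁)) ∘ₗ T ∘ₗ LinearMap.inl Q E₀ E₁)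
    - trC Q p₁ s₁ ((LinearMap.lTensor N (LinearMap.snd Q E₀ E₁)) ∘ₗ T ∘ₗ LinearMap.inr Q E₀ E₁)


set_option linter.all false

namespace CH
open Matrix

section mats
variable {R : Type*} [Ring R] {m n : Type*} [Fintype m] [Fintype n] 

def Cen (Y : Matrix m n R) : Prop := ∀ i j r, Y i j * r = r * Y i j

lemma Cen.tr {Y : Matrix n m R} (h : Cen Y) (X : Matrix m n R) :
    (X * Y).trace = (Y * X).trace := by
  simp only [Matrix.trace, Matrix.diag, Matrix.mul_apply]
  rw [Finset.sum_comm]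
  refine Finset.sum_congr rfl fun i _ => Finset.sum_congr rfl fun j _ => ?_
  rw [h]

lemma comm_T {d a P : Matrix m m R} {T : ℕ → Matrix m m R} (T0 : T 0 = P)
    (Ts : ∀ i, T (i+1) = T i * a) (dP : d * P = d) (Pd : P * d = d) (da : d * a = -(a * d))
    (i : ℕ) : d * T i = (-1 : ℤ)^i • (T i * d) := by
  induction i with
  | zero => simp [T0, dP, Pd]
  | succ i ih =>
    rw [Ts, ← Matrix.mul_assoc, ih, Matrix.smul_mul, Matrix.mul_assoc, da, pow_succ]
    simp [Matrix.mul_assoc]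

lemma homot_zero {d a P σ h : Matrix m m R} {T : ℕ → Matrix m m R} (T0 : T 0 = P)
    (Ts : ∀ i, T (i+1) = T i * a) (dP : d * P = d) (Pd : P * d = d) (da : d * a = -(a * d))
    (cd : Cen d) (sd : d * σ = - (σ * d)) (i : ℕ) (hi : Even i) :
    (σ * T i * (h * d + d * h)).trace = 0 := by
  have h1 : d * T i = T i * d := by
    rw [comm_T T0 Ts dP Pd da, hi.neg_one_pow, one_smul]
  rw [Matrix.mul_add, Matrix.trace_add, ← Matrix.mul_assoc (σ * T i) h d, cd.tr,
    ← Matrix.mul_assoc, ← Matrix.mul_assoc, sd, Matrix.neg_mul, Matrix.neg_mul,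
    Matrix.mul_assoc σ d, h1]
  simp [Matrix.mul_assoc]

lemma tele {aE PE : Matrix m m R} {aF PF : Matrix n n R} {al K : Matrix m n R}
    {TE : ℕ → Matrix m m R} {TF : ℕ → Matrix n n R}
    (TE0 : TE 0 = PE) (TEs : ∀ i, TE (i+1) = TE i * aE)
    (TF0 : TF 0 = PF) (TFs : ∀ i, TF (i+1) = TF i * aF)
    (Pal : PE * al = al) (alP : al * PF = al)
    (hK : al * aF - aE * al = K) (KP : K * PF = K) (i : ℕ) :
    al * TF i - TE i * al = ∑ a ∈ Finset.range i, TE a * K * TF (i - 1 - a) := by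
  induction i with
  | zero => simp [TE0, TF0, Pal, alP]
  | succ i ih =>
    have : al * TF (i+1) - TE (i+1) * al = (al * TF i - TE i * al) * aF
        + TE i * (al * aF - aE * al) := by
      rw [TEs, TFs, Matrix.sub_mul, Matrix.mul_sub]
      simp [Matrix.mul_assoc]
    rw [this, ih, hK, Finset.sum_range_succ, Matrix.sum_mul]
    congr 1
    · refine Finset.sum_congr rfl fun x hx => ?_
      have hx' := Finset.mem_range.1 hx
      have e : i + 1 - 1 - x = (i - 1 - x) + 1 := by omega
      rw [e, TFs]
      simp [Matrix.mul_assoc]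
    · have e : i + 1 - 1 - i = 0 := by omega
      rw [e, TF0, Matrix.mul_assoc, KP]

lemma main_even {dE aE PE sE hE : Matrix m m R} {dF aF PF sF hF : Matrix n n R}
    {al g : Matrix m n R} {be : Matrix n m R}
    {TE : ℕ → Matrix m m R} {TF : ℕ → Matrix n n R}
    (TE0 : TE 0 = PE) (TEs : ∀ i, TE (i+1) = TE i * aE)
    (TF0 : TF 0 = PF) (TFs : ∀ i, TF (i+1) = TF i * aF)
    (TEP : ∀ i, TE i * PE = TE i) (TFP : ∀ i, TF i * PF = TF i)
    (Pal : PE * al = al) (alP : al * PF = al) (gP : g * PF = g)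
    (dPE : dE * PE = dE) (PdE : PE * dE = dE) (dPF : dF * PF = dF) (PdF : PF * dF = dF)
    (daE : dE * aE = -(aE * dE)) (daF : dF * aF = -(aF * dF))
    (hK : al * aF - aE * al = dE * g - g * dF)
    (cdE : Cen dE) (cdF : Cen dF) (cal : Cen al) 
    (sdE : dE * sE = -(sE * dE)) (sdF : dF * sF = -(sF * dF))
    (sal : al * sF = sE * al)
    (dbe : be * dE = dF * be)
    (hhE : hE * dE + dE * hE = al * be - PE)
    (hhF : hF * dF + dF * hF = be * al - PF)
    (i : ℕ) (hi : Even i) : (sE * TE i).trace = (sF * TF i).trace := by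
  have zE := homot_zero (h := hE) TE0 TEs dPE PdE daE cdE sdE i hi
  have zF := homot_zero (h := hF) TF0 TFs dPF PdF daF cdF sdF i hi
  rw [hhE, Matrix.mul_sub, Matrix.trace_sub, Matrix.mul_assoc sE _ PE, TEP, sub_eq_zero] at zE
  rw [hhF, Matrix.mul_sub, Matrix.trace_sub, Matrix.mul_assoc sF _ PF, TFP, sub_eq_zero] at zF
  rw [← zE, ← zF]
  have e1 : (sF * TF i * (be * al)).trace = (sE * (al * TF i) * be).trace := by
    rw [← Matrix.mul_assoc, cal.tr, ← Matrix.mul_assoc, ← Matrix.mul_assoc, sal]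
    simp [Matrix.mul_assoc]
  have e2 : (sE * TE i * (al * be)).trace = (sE * (TE i * al) * be).trace := by
    simp [Matrix.mul_assoc]
  rw [e1, e2]
  symm
  rw [← sub_eq_zero, ← Matrix.trace_sub, ← Matrix.sub_mul, ← Matrix.mul_sub]
  have KP : (dE * g - g * dF) * PF = dE * g - g * dF := by
    rw [Matrix.sub_mul, Matrix.mul_assoc, gP, Matrix.mul_assoc, dPF]
  rw [tele TE0 TEs TF0 TFs Pal alP hK KP i, Matrix.mul_sum, Matrix.sum_mul, Matrix.trace_sum]
  refine Finset.sum_eq_zero fun a ha => ?_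
  have ha' := Finset.mem_range.1 ha
  obtain ⟨b, hb⟩ : ∃ b, b = i - 1 - a := ⟨_, rfl⟩
  rw [← hb]
  have hab : a + b + 1 = i := by omega
  have cE := comm_T TE0 TEs dPE PdE daE a
  have cF := comm_T TF0 TFs dPF PdF daF b
  have hodd : Odd (a + b) := by
    rw [← hab] at hi
    rcases Nat.even_or_odd (a+b) with h | h
    · exact absurd hi (by simpa [Nat.not_even_iff_odd] using h.add_one)
    · exact h
  rw [Matrix.mul_sub, Matrix.sub_mul, Matrix.mul_sub, Matrix.sub_mul, Matrix.trace_sub, sub_eq_zero]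
  have f1 : sE * (TE a * (g * dF) * TF b) * be =
      (-1 : ℤ)^b • (sE * TE a * g * TF b * be * dE) := by
    have : sE * (TE a * (g * dF) * TF b) * be = sE * TE a * g * (dF * TF b) * be := by
      simp [Matrix.mul_assoc]
    rw [this, cF]
    simp [Matrix.mul_assoc, dbe]
  have f2 : (sE * TE a * g * TF b * be * dE).trace
      = - ((-1 : ℤ)^a • (sE * (TE a * (dE * g) * TF b) * be).trace) := by
    rw [cdE.tr]
    have : dE * (sE * TE a * g * TF b * be) = (dE * sE) * TE a * g * TF b * be := by
      simp [Matrix.mul_assoc]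
    rw [this, sdE]
    have : -(sE * dE) * TE a * g * TF b * be = -(sE * (dE * TE a) * g * TF b * be) := by
      simp [Matrix.mul_assoc]
    rw [this, cE]
    simp [Matrix.mul_assoc]
  rw [f1, Matrix.trace_smul, f2, smul_neg, smul_smul, ← pow_add, add_comm b a, hodd.neg_one_pow]
  simp

lemma main_odd {aE PE sE : Matrix m m R} 
    {TE : ℕ → Matrix m m R} 
    (TE0 : TE 0 = PE) (TEs : ∀ i, TE (i+1) = TE i * aE)
    (sP : sE * PE = sE) (Ps : PE * sE = sE)
    (csE : Cen sE) (saE : sE * aE = -(aE * sE))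
    (h2 : ∀ x : R, x + x = 0 → x = 0)
    (i : ℕ) (hi : Odd i) : (sE * TE i).trace = 0 := by
  apply h2
  nth_rewrite 1 [comm_T TE0 TEs sP Ps saE i]
  rw [hi.neg_one_pow, neg_smul, one_smul, Matrix.trace_neg, csE.tr]
  simp

end mats

section lin
variable {Q : Type u} [CommRing Q] {R : Type*} [Ring R] [Algebra Q R]
variable {N E F G : Type u} [AddCommGroup N] [Module Q N] [AddCommGroup E] [Module Q E]
  [AddCommGroup F] [Module Q F] [AddCommGroup G] [Module Q G]
variable {m n l : Type*} [Fintype m] [Fintype n] [Fintype l]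

/-- coordinate on `N ⊗ E` -/
noncomputable def co (N : Type u) [AddCommGroup N] [Module Q N] (c : E →ₗ[Q] Q) :
    N ⊗[Q] E →ₗ[Q] N :=
  (TensorProduct.rid Q N).toLinearMap ∘ₗ LinearMap.lTensor N c

@[simp] lemma co_tmul (c : E →ₗ[Q] Q) (x : N) (e : E) : co N c (x ⊗ₜ e) = c e • x := by
  simp [co]

noncomputable def mat (ψ : N →ₗ[Q] R) (b : m → E) (c : n → F →ₗ[Q] Q) (T : E →ₗ[Q] N ⊗[Q] F) :
    Matrix m n R := Matrix.of fun i j => ψ (co N (c j) (T (b i)))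

variable (R) in
noncomputable def mat0 (b : m → E) (c : n → F →ₗ[Q] Q) (T : E →ₗ[Q] F) :
    Matrix m n R := Matrix.of fun i j => algebraMap Q R (c j (T (b i)))

lemma cen_mat0 (b : m → E) (c : n → F →ₗ[Q] Q) (T : E →ₗ[Q] F) : Cen (mat0 R b c T) :=
  fun i j r => Algebra.commutes _ r

def Dual (b : m → E) (c : m → E →ₗ[Q] Q) : Prop := ∀ e, ∑ i, c i e • b i = e

lemma Dual.map {b : m → E} {c : m → E →ₗ[Q] Q} (h : Dual b c) (T : E →ₗ[Q] F) (e : E) :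
    T e = ∑ i, c i e • T (b i) := by
  conv_lhs => rw [← h e]
  simp

lemma mat0_comp {b : m → E} {b' : n → F} {c' : n → F →ₗ[Q] Q} {c'' : l → G →ₗ[Q] Q}
    (h : Dual b' c') (S : F →ₗ[Q] G) (T : E →ₗ[Q] F) :
    mat0 R b c'' (S ∘ₗ T) = mat0 R b c' T * mat0 R b' c'' S := by
  ext i j
  simp only [mat0, Matrix.of_apply, Matrix.mul_apply, LinearMap.comp_apply]
  rw [h.map S]
  simp

lemma mat_comp {ψ : N →ₗ[Q] R} {b : m → E} {b' : n → F} {c' : n → F →ₗ[Q] Q}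
    {c'' : l → G →ₗ[Q] Q}
    (h : Dual b' c') (S : F →ₗ[Q] N ⊗[Q] G) (T : E →ₗ[Q] F) :
    mat ψ b c'' (S ∘ₗ T) = mat0 R b c' T * mat ψ b' c'' S := by
  ext i j
  simp only [mat0, mat, Matrix.of_apply, Matrix.mul_apply, LinearMap.comp_apply]
  rw [h.map S]
  simp [Algebra.smul_def]

lemma mat_lcomp {ψ : N →ₗ[Q] R} {b : m → E} {b' : n → F} {c' : n → F →ₗ[Q] Q}
    {c'' : l → G →ₗ[Q] Q}
    (h : Dual b' c') (S : F →ₗ[Q] G) (T : E →ₗ[Q] N ⊗[Q] F) :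
    mat ψ b c'' (LinearMap.lTensor N S ∘ₗ T) = mat ψ b c' T * mat0 R b' c'' S := by
  ext i j
  simp only [mat0, mat, Matrix.of_apply, Matrix.mul_apply, LinearMap.comp_apply]
  induction T (b i) using TensorProduct.induction_on with
  | zero => simp
  | tmul x e =>
    simp only [LinearMap.lTensor_tmul, co_tmul]
    rw [h.map S]
    simp only [map_sum, map_smul, Finset.sum_smul, smul_eq_mul]
    refine Finset.sum_congr rfl fun k _ => ?_
    rw [← Algebra.commutes, ← Algebra.smul_def, smul_smul, mul_comm]
  | add x y hx hy => simp [hx, hy, add_mul, Finset.sum_add_distrib]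

@[simp] lemma mat_add (ψ : N →ₗ[Q] R) (b : m → E) (c : n → F →ₗ[Q] Q) (S T : E →ₗ[Q] N ⊗[Q] F) :
    mat ψ b c (S + T) = mat ψ b c S + mat ψ b c T := by ext; simp [mat]
@[simp] lemma mat_sub (ψ : N →ₗ[Q] R) (b : m → E) (c : n → F →ₗ[Q] Q) (S T : E →ₗ[Q] N ⊗[Q] F) :
    mat ψ b c (S - T) = mat ψ b c S - mat ψ b c T := by ext; simp [mat]
@[simp] lemma mat_neg (ψ : N →ₗ[Q] R) (b : m → E) (c : n → F →ₗ[Q] Q) (S : E →ₗ[Q] N ⊗[Q] F) :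
    mat ψ b c (-S) = -mat ψ b c S := by ext; simp [mat]
@[simp] lemma mat0_add (b : m → E) (c : n → F →ₗ[Q] Q) (S T : E →ₗ[Q] F) :
    mat0 R b c (S + T) = mat0 R b c S + mat0 R b c T := by ext; simp [mat0]
@[simp] lemma mat0_sub (b : m → E) (c : n → F →ₗ[Q] Q) (S T : E →ₗ[Q] F) :
    mat0 R b c (S - T) = mat0 R b c S - mat0 R b c T := by ext; simp [mat0]
@[simp] lemma mat0_neg (b : m → E) (c : n → F →ₗ[Q] Q) (S : E →ₗ[Q] F) :
    mat0 R b c (-S) = -mat0 R b c S := by ext; simp [mat0]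

end lin

section at_
variable {k Q : Type u} [CommRing k] [CommRing Q] [Algebra k Q]
variable {R : Type u} [Ring R] [Algebra Q R] (φ : ExteriorAlgebra Q (Ω[Q⁄k]) →ₐ[Q] R)
variable {E F : Type u} [AddCommGroup E] [Module Q E]
  [AddCommGroup F] [Module Q F]
variable {m n l : Type} [Fintype m] [Fintype n]

lemma co_stepMul (c : E →ₗ[Q] Q) (ω : ExteriorAlgebra Q (Ω[Q⁄k])) (z : Ω[Q⁄k] ⊗[Q] E) :
    co _ c (stepMul k Q E (ω ⊗ₜ z)) = ω * ExteriorAlgebra.ι Q (co _ c z) := by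
  induction z using TensorProduct.induction_on with
  | zero => simp
  | tmul x e => simp [stepMul]
  | add x y hx hy => simp only [TensorProduct.tmul_add, map_add, hx, hy, mul_add]

lemma mat_step {b : m → E} {c : m → E →ₗ[Q] Q} (h : Dual b c) (At : E →ₗ[Q] Ω[Q⁄k] ⊗[Q] E) (i : ℕ) :
    mat φ.toLinearMap b c (atIter k Q E At (i+1)) =
      mat φ.toLinearMap b c (atIter k Q E At i) *
      mat (φ.toLinearMap ∘ₗ ExteriorAlgebra.ι Q) b c At := by
  ext s t
  simp only [mat, Matrix.of_apply, Matrix.mul_apply, LinearMap.comp_apply, atIter]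
  induction atIter k Q E At i (b s) using TensorProduct.induction_on with
  | zero => simp
  | tmul x e =>
    simp only [LinearMap.lTensor_tmul, co_stepMul]
    rw [h.map At]
    simp [Finset.mul_sum]
  | add x y hx hy => simp only [map_add, hx, hy, add_mul, Finset.sum_add_distrib]

lemma mat_zero (b : m → E) (c : m → E →ₗ[Q] Q) (At : E →ₗ[Q] Ω[Q⁄k] ⊗[Q] E) :
    mat φ.toLinearMap b c (atIter k Q E At 0) = mat0 R b c LinearMap.id := by
  ext s t
  simp [mat, mat0, atIter, Algebra.algebraMap_eq_smul_one]

lemma conn_core (f : Q) (hf : φ (ExteriorAlgebra.ι Q (KaehlerDifferential.D k Q f)) = 0)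
    (h2 : ∀ x : R, x + x = 0 → x = 0)
    {bE : m → E} {cE : m → E →ₗ[Q] Q} (DE : Dual bE cE)
    {bF : n → F} {cF : n → F →ₗ[Q] Q} (DF : Dual bF cF)
    (nE : Conn k Q E) (nF : Conn k Q F)
    (dE sE hE : E →ₗ[Q] E) (dF sF hF : F →ₗ[Q] F)
    (ddE : ∀ e, dE (dE e) = f • e) (ddF : ∀ e, dF (dF e) = f • e)
    (sdE : sE ∘ₗ dE = - (dE ∘ₗ sE)) (sdF : sF ∘ₗ dF = - (dF ∘ₗ sF))
    (al : E →ₗ[Q] F) (be : F →ₗ[Q] E)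
    (dal : dF ∘ₗ al = al ∘ₗ dE) (dbe : dE ∘ₗ be = be ∘ₗ dF)
    (sal : sF ∘ₗ al = al ∘ₗ sE)
    (hhE : dE ∘ₗ hE + hE ∘ₗ dE = be ∘ₗ al - LinearMap.id)
    (hhF : dF ∘ₗ hF + hF ∘ₗ dF = al ∘ₗ be - LinearMap.id)
    (AtE : E →ₗ[Q] Ω[Q⁄k] ⊗[Q] E) (AtF : F →ₗ[Q] Ω[Q⁄k] ⊗[Q] F)
    (hAtE : ∀ e, AtE e = nE.toFun (dE e) - LinearMap.lTensor _ dE (nE.toFun e))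
    (hAtF : ∀ e, AtF e = nF.toFun (dF e) - LinearMap.lTensor _ dF (nF.toFun e))
    (sAtE : AtE ∘ₗ sE = -(LinearMap.lTensor _ sE ∘ₗ AtE))
    (sAtF : AtF ∘ₗ sF = -(LinearMap.lTensor _ sF ∘ₗ AtF)) (i : ℕ) :
    (mat φ.toLinearMap bE cE (atIter k Q E AtE i ∘ₗ sE)).trace =
    (mat φ.toLinearMap bF cF (atIter k Q F AtF i ∘ₗ sF)).trace := by
  let ψ := φ.toLinearMap ∘ₗ ExteriorAlgebra.ι Q
  rw [mat_comp DE, mat_comp DF]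
  have anti : ∀ {E : Type u} [AddCommGroup E] [Module Q E] {m : Type} [Fintype m]
      {b : m → E} {c : m → E →ₗ[Q] Q} (D : Dual b c) (nE : Conn k Q E) (d : E →ₗ[Q] E)
      (dd : ∀ e, d (d e) = f • e) (At : E →ₗ[Q] Ω[Q⁄k] ⊗[Q] E)
      (hAt : ∀ e, At e = nE.toFun (d e) - LinearMap.lTensor _ d (nE.toFun e)),
      mat0 R b c d * mat ψ b c At = -(mat ψ b c At * mat0 R b c d) := by
    intro E _ _ m _ b c D nE d dd At hAt
    rw [← mat_comp D, ← mat_lcomp D, ← add_eq_zero_iff_eq_neg, ← mat_add]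
    have : At ∘ₗ d + LinearMap.lTensor _ d ∘ₗ At =
        TensorProduct.mk Q _ E (KaehlerDifferential.D k Q f) := by
      ext e
      simp only [LinearMap.add_apply, LinearMap.comp_apply, hAt, dd, nE.leibniz, map_sub,
        TensorProduct.mk_apply]
      rw [← LinearMap.comp_apply (LinearMap.lTensor _ d) (LinearMap.lTensor _ d),
        ← LinearMap.lTensor_comp]
      have : d ∘ₗ d = f • LinearMap.id := by ext; simp [dd]
      rw [this, LinearMap.lTensor_smul]
      simp
    rw [this]
    ext s t
    simp [mat, ψ, hf]
  rcases Nat.even_or_odd i with hi | hi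
  · let g : E →ₗ[Q] Ω[Q⁄k] ⊗[Q] F :=
      { toFun := fun e => nF.toFun (al e) - LinearMap.lTensor _ al (nE.toFun e)
        map_add' := by
          intro x y
          simp only [map_add, nE.map_add, nF.map_add]; abel
        map_smul' := by
          intro q x
          simp [nE.leibniz, nF.leibniz, smul_sub] }
    refine main_even (TE := fun i => mat φ.toLinearMap bE cE (atIter k Q E AtE i))
      (TF := fun i => mat φ.toLinearMap bF cF (atIter k Q F AtF i))
      (aE := mat ψ bE cE AtE) (aF := mat ψ bF cF AtF)
      (dE := mat0 R bE cE dE) (dF := mat0 R bF cF dF)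
      (hE := mat0 R bE cE hE) (hF := mat0 R bF cF hF)
      (al := mat0 R bE cF al) (be := mat0 R bF cE be) (g := mat ψ bE cF g)
      (mat_zero φ _ _ _) (mat_step φ DE _) (mat_zero φ _ _ _) (mat_step φ DF _)
      ?_ ?_ ?_ ?_ ?_ ?_ ?_ ?_ ?_ (anti DE nE _ ddE _ hAtE) (anti DF nF _ ddF _ hAtF) ?_
      (cen_mat0 _ _ _) (cen_mat0 _ _ _) (cen_mat0 _ _ _) ?_ ?_ ?_ ?_ ?_ ?_ i hi
    · intro i; rw [← mat_lcomp DE]; simp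
    · intro i; rw [← mat_lcomp DF]; simp
    · rw [← mat0_comp DE]; simp
    · rw [← mat0_comp DF]; simp
    · rw [← mat_lcomp DF]; simp
    · rw [← mat0_comp DE]; simp
    · rw [← mat0_comp DE]; simp
    · rw [← mat0_comp DF]; simp
    · rw [← mat0_comp DF]; simp
    · rw [← mat_comp DF, ← mat_lcomp DE, ← mat_comp DE, ← mat_lcomp DF, ← mat_sub, ← mat_sub]
      congr 1
      ext e
      have c1 : ∀ z, LinearMap.lTensor (Ω[Q⁄k]) dF (LinearMap.lTensor _ al z)
          = LinearMap.lTensor _ al (LinearMap.lTensor _ dE z) := by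
        intro z
        rw [← LinearMap.comp_apply, ← LinearMap.lTensor_comp, dal, LinearMap.lTensor_comp]; rfl
      have c2 : ∀ e, dF (al e) = al (dE e) := fun e => LinearMap.congr_fun dal e
      simp only [LinearMap.sub_apply, LinearMap.comp_apply, hAtE, hAtF, g, LinearMap.coe_mk,
        AddHom.coe_mk, map_sub, c1, c2]
      abel
    · rw [← mat0_comp DE, ← mat0_comp DE, sdE, mat0_neg]
    · rw [← mat0_comp DF, ← mat0_comp DF, sdF, mat0_neg]
    · rw [← mat0_comp DF, ← mat0_comp DE, sal]
    · rw [← mat0_comp DE, ← mat0_comp DF, dbe]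
    · rw [← mat0_comp DE, ← mat0_comp DE, ← mat0_comp DF, ← mat0_add, hhE, mat0_sub]
    · rw [← mat0_comp DF, ← mat0_comp DF, ← mat0_comp DE, ← mat0_add, hhF, mat0_sub]
  · have odd : ∀ {E : Type u} [AddCommGroup E] [Module Q E] {m : Type} [Fintype m]
      {b : m → E} {c : m → E →ₗ[Q] Q} (D : Dual b c) (sE : E →ₗ[Q] E)
      (AtE : E →ₗ[Q] Ω[Q⁄k] ⊗[Q] E)
      (sAtE : AtE ∘ₗ sE = -(LinearMap.lTensor _ sE ∘ₗ AtE)),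
        (mat0 R b c sE * mat φ.toLinearMap b c (atIter k Q E AtE i)).trace = 0 := by
      intro E _ _ m _ b c DE sE AtE sAtE
      refine main_odd (TE := fun i => mat φ.toLinearMap b c (atIter k Q E AtE i))
        (aE := mat ψ b c AtE) (mat_zero φ _ _ _) (mat_step φ DE _) ?_ ?_ (cen_mat0 _ _ _) ?_ h2
        i hi
      · rw [← mat0_comp DE]; simp
      · rw [← mat0_comp DE]; simp
      · rw [← mat_comp DE, ← mat_lcomp DE, sAtE, mat_neg]
    rw [odd DE sE _ sAtE, odd DF sF _ sAtF]

end at_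

section prod
variable {k Q : Type u} [CommRing k] [CommRing Q] [Algebra k Q]
variable {E₀ E₁ F₀ F₁ : Type u}
    [AddCommGroup E₀] [Module Q E₀] [AddCommGroup E₁] [Module Q E₁]
    [AddCommGroup F₀] [Module Q F₀] [AddCommGroup F₁] [Module Q F₁]

def sg (Q E₀ E₁ : Type u) [CommRing Q] [AddCommGroup E₀] [Module Q E₀]
    [AddCommGroup E₁] [Module Q E₁] : E₀ × E₁ →ₗ[Q] E₀ × E₁ :=
  LinearMap.inl Q E₀ E₁ ∘ₗ LinearMap.fst Q E₀ E₁ - LinearMap.inr Q E₀ E₁ ∘ₗ LinearMap.snd Q E₀ E₁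

def od (B : E₀ →ₗ[Q] E₁) (A : E₁ →ₗ[Q] E₀) : E₀ × E₁ →ₗ[Q] E₀ × E₁ :=
  LinearMap.inr Q E₀ E₁ ∘ₗ B ∘ₗ LinearMap.fst Q E₀ E₁
    + LinearMap.inl Q E₀ E₁ ∘ₗ A ∘ₗ LinearMap.snd Q E₀ E₁

@[simp] lemma sg_apply (e : E₀ × E₁) : sg Q E₀ E₁ e = (e.1, -e.2) := by
  simp [sg]
@[simp] lemma od_apply (B : E₀ →ₗ[Q] E₁) (A : E₁ →ₗ[Q] E₀) (e : E₀ × E₁) :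
    od B A e = (A e.2, B e.1) := by
  simp [od]

noncomputable def pconn (n0 : Conn k Q E₀) (n1 : Conn k Q E₁) : Conn k Q (E₀ × E₁) where
  toFun e := LinearMap.lTensor _ (LinearMap.inl Q E₀ E₁) (n0.toFun e.1)
    + LinearMap.lTensor _ (LinearMap.inr Q E₀ E₁) (n1.toFun e.2)
  map_add x y := by simp only [Prod.fst_add, Prod.snd_add, n0.map_add, n1.map_add, map_add]; abel
  leibniz q x := by
    have : x = LinearMap.inl Q E₀ E₁ x.1 + LinearMap.inr Q E₀ E₁ x.2 := by simp
    conv_rhs => rw [this]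
    simp only [Prod.smul_fst, Prod.smul_snd, n0.leibniz, n1.leibniz, map_add, map_smul,
      LinearMap.lTensor_tmul, TensorProduct.tmul_add, smul_add]
    simp
    abel

lemma pconn_At (n0 : Conn k Q E₀) (n1 : Conn k Q E₁) (A : E₁ →ₗ[Q] E₀) (B : E₀ →ₗ[Q] E₁)
    (AtE : (E₀ × E₁) →ₗ[Q] Ω[Q⁄k] ⊗[Q] (E₀ × E₁))
    (At₁ : E₁ →ₗ[Q] Ω[Q⁄k] ⊗[Q] E₀) (At₀ : E₀ →ₗ[Q] Ω[Q⁄k] ⊗[Q] E₁)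
    (hAt₁ : ∀ e, At₁ e = n0.toFun (A e) - (LinearMap.lTensor (Ω[Q⁄k]) A) (n1.toFun e))
    (hAt₀ : ∀ e, At₀ e = n1.toFun (B e) - (LinearMap.lTensor (Ω[Q⁄k]) B) (n0.toFun e))
    (hAtE : AtE = (LinearMap.lTensor (Ω[Q⁄k]) (LinearMap.inr Q E₀ E₁)) ∘ₗ At₀ ∘ₗ
          LinearMap.fst Q E₀ E₁
        + (LinearMap.lTensor (Ω[Q⁄k]) (LinearMap.inl Q E₀ E₁)) ∘ₗ At₁ ∘ₗ
          LinearMap.snd Q E₀ E₁) (e : E₀ × E₁) :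
    AtE e = (pconn n0 n1).toFun (od B A e)
      - LinearMap.lTensor _ (od B A) ((pconn n0 n1).toFun e) := by
  have h1 : ∀ z, LinearMap.lTensor (Ω[Q⁄k]) (od B A) (LinearMap.lTensor _ (LinearMap.inl Q E₀ E₁) z)
      = LinearMap.lTensor _ (LinearMap.inr Q E₀ E₁) (LinearMap.lTensor _ B z) := by
    intro z
    rw [← LinearMap.comp_apply, ← LinearMap.comp_apply, ← LinearMap.lTensor_comp,
      ← LinearMap.lTensor_comp]
    congr 2
    ext <;> simp
  have h2 : ∀ z, LinearMap.lTensor (Ω[Q⁄k]) (od B A) (LinearMap.lTensor _ (LinearMap.inr Q E₀ E₁) z)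
      = LinearMap.lTensor _ (LinearMap.inl Q E₀ E₁) (LinearMap.lTensor _ A z) := by
    intro z
    rw [← LinearMap.comp_apply, ← LinearMap.comp_apply, ← LinearMap.lTensor_comp,
      ← LinearMap.lTensor_comp]
    congr 2
    ext <;> simp
  subst hAtE
  simp only [pconn, LinearMap.add_apply, LinearMap.comp_apply, LinearMap.fst_apply,
    LinearMap.snd_apply, hAt₀, hAt₁, map_sub, map_add, h1, h2, od_apply]
  abel

lemma sg_At (AtE : (E₀ × E₁) →ₗ[Q] Ω[Q⁄k] ⊗[Q] (E₀ × E₁))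
    (At₁ : E₁ →ₗ[Q] Ω[Q⁄k] ⊗[Q] E₀) (At₀ : E₀ →ₗ[Q] Ω[Q⁄k] ⊗[Q] E₁)
    (hAtE : AtE = (LinearMap.lTensor (Ω[Q⁄k]) (LinearMap.inr Q E₀ E₁)) ∘ₗ At₀ ∘ₗ
          LinearMap.fst Q E₀ E₁
        + (LinearMap.lTensor (Ω[Q⁄k]) (LinearMap.inl Q E₀ E₁)) ∘ₗ At₁ ∘ₗ
          LinearMap.snd Q E₀ E₁) :
    AtE ∘ₗ sg Q E₀ E₁ = -(LinearMap.lTensor _ (sg Q E₀ E₁) ∘ₗ AtE) := by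
  have h1 : LinearMap.lTensor (Ω[Q⁄k]) (sg Q E₀ E₁) ∘ₗ (LinearMap.lTensor _ (LinearMap.inl Q E₀ E₁))
      = LinearMap.lTensor _ (LinearMap.inl Q E₀ E₁) := by
    rw [← LinearMap.lTensor_comp]
    congr 1
    ext <;> simp
  have h2 : LinearMap.lTensor (Ω[Q⁄k]) (sg Q E₀ E₁) ∘ₗ (LinearMap.lTensor _ (LinearMap.inr Q E₀ E₁))
      = -LinearMap.lTensor (Ω[Q⁄k]) (LinearMap.inr Q E₀ E₁) := by
    rw [← LinearMap.lTensor_comp, ← LinearMap.lTensor_neg]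
    congr 1
    ext <;> simp
  subst hAtE
  have h1' := fun z => LinearMap.congr_fun h1 z
  have h2' := fun z => LinearMap.congr_fun h2 z
  simp only [LinearMap.comp_apply, LinearMap.neg_apply] at h1' h2'
  refine LinearMap.ext fun e => ?_
  simp only [LinearMap.comp_apply, LinearMap.add_apply, LinearMap.neg_apply, map_add, h1', h2',
    sg_apply, LinearMap.fst_apply, LinearMap.snd_apply, map_neg]
  abel

noncomputable def bb {r₀ r₁ : ℕ} (p₀ : (Fin r₀ → Q) →ₗ[Q] E₀) (p₁ : (Fin r₁ → Q) →ₗ[Q] E₁) :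
    Fin r₀ ⊕ Fin r₁ → E₀ × E₁ :=
  Sum.elim (fun j => LinearMap.inl Q E₀ E₁ (p₀ (Pi.single j 1)))
    (fun j => LinearMap.inr Q E₀ E₁ (p₁ (Pi.single j 1)))

def cc {r₀ r₁ : ℕ} (s₀ : E₀ →ₗ[Q] (Fin r₀ → Q)) (s₁ : E₁ →ₗ[Q] (Fin r₁ → Q)) :
    Fin r₀ ⊕ Fin r₁ → E₀ × E₁ →ₗ[Q] Q :=
  Sum.elim (fun j => LinearMap.proj j ∘ₗ s₀ ∘ₗ LinearMap.fst Q E₀ E₁)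
    (fun j => LinearMap.proj j ∘ₗ s₁ ∘ₗ LinearMap.snd Q E₀ E₁)

lemma dual_bc {r₀ r₁ : ℕ} (p₀ : (Fin r₀ → Q) →ₗ[Q] E₀) (p₁ : (Fin r₁ → Q) →ₗ[Q] E₁)
    (s₀ : E₀ →ₗ[Q] (Fin r₀ → Q)) (s₁ : E₁ →ₗ[Q] (Fin r₁ → Q))
    (h₀ : ∀ e, p₀ (s₀ e) = e) (h₁ : ∀ e, p₁ (s₁ e) = e) : Dual (bb p₀ p₁) (cc s₀ s₁) := by
  have key : ∀ {r : ℕ} {E : Type u} [AddCommGroup E] [Module Q E] (p : (Fin r → Q) →ₗ[Q] E)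
      (x : Fin r → Q), ∑ j, x j • p (Pi.single j 1) = p x := by
    intro r E _ _ p x
    conv_rhs => rw [pi_eq_sum_univ' x]
    simp only [map_sum, map_smul]
  intro e
  simp only [Fintype.sum_sum_type, bb, cc, Sum.elim_inl, Sum.elim_inr, LinearMap.comp_apply,
    LinearMap.proj_apply, LinearMap.fst_apply, LinearMap.snd_apply]
  have k1 := key (LinearMap.inl Q E₀ E₁ ∘ₗ p₀) (s₀ e.1)
  have k2 := key (LinearMap.inr Q E₀ E₁ ∘ₗ p₁) (s₁ e.2)
  simp only [LinearMap.comp_apply, h₀, h₁] at k1 k2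
  rw [k1, k2]
  simp

lemma strT_eq {R : Type u} [Ring R] [Algebra Q R] {N : Type u} [AddCommGroup N] [Module Q N]
    (ψ : N →ₗ[Q] R)
    {r₀ r₁ : ℕ} (p₀ : (Fin r₀ → Q) →ₗ[Q] E₀) (p₁ : (Fin r₁ → Q) →ₗ[Q] E₁)
    (s₀ : E₀ →ₗ[Q] (Fin r₀ → Q)) (s₁ : E₁ →ₗ[Q] (Fin r₁ → Q))
    (T : (E₀ × E₁) →ₗ[Q] N ⊗[Q] (E₀ × E₁)) :
    ψ (strT Q p₀ s₀ p₁ s₁ T) = (mat ψ (bb p₀ p₁) (cc s₀ s₁) (T ∘ₗ sg Q E₀ E₁)).trace := by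
  have a1 : sg Q E₀ E₁ ∘ₗ LinearMap.inl Q E₀ E₁ = LinearMap.inl Q E₀ E₁ := by ext <;> simp
  have a2 : sg Q E₀ E₁ ∘ₗ LinearMap.inr Q E₀ E₁ = -LinearMap.inr Q E₀ E₁ := by ext <;> simp
  have a1' := fun x => LinearMap.congr_fun a1 x
  have a2' := fun x => LinearMap.congr_fun a2 x
  simp only [LinearMap.comp_apply, LinearMap.neg_apply] at a1' a2'
  simp only [strT, trC, Matrix.trace, Matrix.diag, mat, Matrix.of_apply, Fintype.sum_sum_type,
    bb, cc, Sum.elim_inl, Sum.elim_inr, co, LinearMap.lTensor_comp, LinearMap.comp_apply,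
    a1', a2', map_sub, map_sum, map_neg, Finset.sum_neg_distrib, sub_eq_add_neg, map_add,
    LinearEquiv.coe_coe]

lemma swap_ι (m : Ω[Q⁄k]) (x : ExteriorAlgebra Q (Ω[Q⁄k])) :
    ∃ y, x * ExteriorAlgebra.ι Q m = ExteriorAlgebra.ι Q m * y := by
  induction x using ExteriorAlgebra.induction with
  | algebraMap r => exact ⟨algebraMap _ _ r, Algebra.commutes _ _⟩
  | ι x =>
    refine ⟨-ExteriorAlgebra.ι Q x, ?_⟩
    rw [mul_neg, ← add_eq_zero_iff_eq_neg]
    exact ExteriorAlgebra.ι_add_mul_swap x m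
  | mul a b ha hb =>
    obtain ⟨a', ha⟩ := ha
    obtain ⟨b', hb⟩ := hb
    exact ⟨a' * b', by rw [mul_assoc, hb, ← mul_assoc, ha, mul_assoc]⟩
  | add a b ha hb =>
    obtain ⟨a', ha⟩ := ha
    obtain ⟨b', hb⟩ := hb
    exact ⟨a' + b', by rw [add_mul, ha, hb, mul_add]⟩

def idl (m : Ω[Q⁄k]) : Ideal (ExteriorAlgebra Q (Ω[Q⁄k])) where
  carrier := {x | ∃ w, x = ExteriorAlgebra.ι Q m * w}
  add_mem' := by
    rintro _ _ ⟨a, rfl⟩ ⟨b, rfl⟩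
    exact ⟨a + b, by rw [mul_add]⟩
  zero_mem' := ⟨0, by simp⟩
  smul_mem' := by
    rintro c _ ⟨a, rfl⟩
    obtain ⟨y, hy⟩ := swap_ι m c
    exact ⟨y * a, by rw [smul_eq_mul, ← mul_assoc, hy, mul_assoc]⟩

instance (m : Ω[Q⁄k]) : (idl m).IsTwoSided := ⟨by
  rintro _ b ⟨a, rfl⟩
  exact ⟨a * b, by rw [mul_assoc]⟩⟩

end prod
end CH

theorem chern_character_homotopy_equivalence_invariant
    [Algebra ℚ k] [Algebra ℚ Q] [IsScalarTower ℚ k Q]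
    (n : ℕ) [Algebra.Smooth k Q]
    (hdim : ∀ ω : Fin (n + 1) → Ω[Q⁄k],
      (List.ofFn (fun t => ExteriorAlgebra.ι Q (ω t))).prod = 0)
    (E₀ E₁ F₀ F₁ : Type u)
    [AddCommGroup E₀] [Module Q E₀] [AddCommGroup E₁] [Module Q E₁]
    [AddCommGroup F₀] [Module Q F₀] [AddCommGroup F₁] [Module Q F₁]
    [Module.Finite Q E₀] [Module.Projective Q E₀]
    [Module.Finite Q E₁] [Module.Projective Q E₁]
    [Module.Finite Q F₀] [Module.Projective Q F₀]
    [Module.Finite Q F₁] [Module.Projective Q F₁]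
    {r₀ r₁ t₀ t₁ : ℕ}
    (p₀ : (Fin r₀ → Q) →ₗ[Q] E₀) (s₀ : E₀ →ₗ[Q] (Fin r₀ → Q)) (hps₀ : ∀ e, p₀ (s₀ e) = e)
    (p₁ : (Fin r₁ → Q) →ₗ[Q] E₁) (s₁ : E₁ →ₗ[Q] (Fin r₁ → Q)) (hps₁ : ∀ e, p₁ (s₁ e) = e)
    (q₀ : (Fin t₀ → Q) →ₗ[Q] F₀) (u₀ : F₀ →ₗ[Q] (Fin t₀ → Q)) (hqu₀ : ∀ e, q₀ (u₀ e) = e)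
    (q₁ : (Fin t₁ → Q) →ₗ[Q] F₁) (u₁ : F₁ →ₗ[Q] (Fin t₁ → Q)) (hqu₁ : ∀ e, q₁ (u₁ e) = e)
    (f : Q)
    -- the matrix factorization E = (E₁ -A→ E₀ -B→ E₁)
    (A : E₁ →ₗ[Q] E₀) (B : E₀ →ₗ[Q] E₁)
    (hAB : ∀ y, A (B y) = f • y) (hBA : ∀ x, B (A x) = f • x)
    -- the matrix factorization E′ = (F₁ -C→ F₀ -D→ F₁)
    (C : F₁ →ₗ[Q] F₀) (D : F₀ →ₗ[Q] F₁)
    (hCD : ∀ y, C (D y) = f • y) (hDC : ∀ x, D (C x) = f • x)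
    -- a homotopy equivalence: strict morphisms α : E → E′ and β : E′ → E …
    (α₀ : E₀ →ₗ[Q] F₀) (α₁ : E₁ →ₗ[Q] F₁)
    (hα : C ∘ₗ α₁ = α₀ ∘ₗ A ∧ D ∘ₗ α₀ = α₁ ∘ₗ B)
    (β₀ : F₀ →ₗ[Q] E₀) (β₁ : F₁ →ₗ[Q] E₁)
    (hβ : A ∘ₗ β₁ = β₀ ∘ₗ C ∧ B ∘ₗ β₀ = β₁ ∘ₗ D)
    -- … with β∘α homotopic to id_E and α∘β homotopic to id_{E′}
    (x : E₀ →ₗ[Q] E₁) (y : E₁ →ₗ[Q] E₀)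
    (hhE₀ : A ∘ₗ x + y ∘ₗ B = β₀ ∘ₗ α₀ - LinearMap.id)
    (hhE₁ : B ∘ₗ y + x ∘ₗ A = β₁ ∘ₗ α₁ - LinearMap.id)
    (v : F₀ →ₗ[Q] F₁) (w : F₁ →ₗ[Q] F₀)
    (hhF₀ : C ∘ₗ v + w ∘ₗ D = α₀ ∘ₗ β₀ - LinearMap.id)
    (hhF₁ : D ∘ₗ w + v ∘ₗ C = α₁ ∘ₗ β₁ - LinearMap.id)
    -- connections and Atiyah classes for E and for E′
    (na0 : Conn k Q E₀) (na1 : Conn k Q E₁) (nb0 : Conn k Q F₀) (nb1 : Conn k Q F₁)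
    (AtE : (E₀ × E₁) →ₗ[Q] Ω[Q⁄k] ⊗[Q] (E₀ × E₁))
    (At₁ : E₁ →ₗ[Q] Ω[Q⁄k] ⊗[Q] E₀) (At₀ : E₀ →ₗ[Q] Ω[Q⁄k] ⊗[Q] E₁)
    (hAt₁ : ∀ e, At₁ e = na0.toFun (A e) - (LinearMap.lTensor (Ω[Q⁄k]) A) (na1.toFun e))
    (hAt₀ : ∀ e, At₀ e = na1.toFun (B e) - (LinearMap.lTensor (Ω[Q⁄k]) B) (na0.toFun e))
    (hAtE : AtE = (LinearMap.lTensor (Ω[Q⁄k]) (LinearMap.inr Q E₀ E₁)) ∘ₗ At₀ ∘ₗ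
          LinearMap.fst Q E₀ E₁
        + (LinearMap.lTensor (Ω[Q⁄k]) (LinearMap.inl Q E₀ E₁)) ∘ₗ At₁ ∘ₗ
          LinearMap.snd Q E₀ E₁)
    (AtF : (F₀ × F₁) →ₗ[Q] Ω[Q⁄k] ⊗[Q] (F₀ × F₁))
    (Bt₁ : F₁ →ₗ[Q] Ω[Q⁄k] ⊗[Q] F₀) (Bt₀ : F₀ →ₗ[Q] Ω[Q⁄k] ⊗[Q] F₁)
    (hBt₁ : ∀ e, Bt₁ e = nb0.toFun (C e) - (LinearMap.lTensor (Ω[Q⁄k]) C) (nb1.toFun e))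
    (hBt₀ : ∀ e, Bt₀ e = nb1.toFun (D e) - (LinearMap.lTensor (Ω[Q⁄k]) D) (nb0.toFun e))
    (hAtF : AtF = (LinearMap.lTensor (Ω[Q⁄k]) (LinearMap.inr Q F₀ F₁)) ∘ₗ Bt₀ ∘ₗ
          LinearMap.fst Q F₀ F₁
        + (LinearMap.lTensor (Ω[Q⁄k]) (LinearMap.inl Q F₀ F₁)) ∘ₗ Bt₁ ∘ₗ
          LinearMap.snd Q F₀ F₁) :
    ∃ w : ExteriorAlgebra Q (Ω[Q⁄k]),
      (∑ i ∈ Finset.range (n + 1), (algebraMap ℚ Q (1 / (i.factorial : ℚ))) •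
          strT Q p₀ s₀ p₁ s₁ (atIter k Q (E₀ × E₁) AtE i))
        - (∑ i ∈ Finset.range (n + 1), (algebraMap ℚ Q (1 / (i.factorial : ℚ))) •
            strT Q q₀ u₀ q₁ u₁ (atIter k Q (F₀ × F₁) AtF i))
        = ExteriorAlgebra.ι Q (KaehlerDifferential.D k Q f) * w := by
  have key : ∀ i, strT Q p₀ s₀ p₁ s₁ (atIter k Q (E₀ × E₁) AtE i)
      - strT Q q₀ u₀ q₁ u₁ (atIter k Q (F₀ × F₁) AtF i)
      ∈ CH.idl (KaehlerDifferential.D k Q f) := by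
    intro i
    let φ := Ideal.Quotient.mkₐ Q (CH.idl (KaehlerDifferential.D k Q f))
    have hφ : ∀ x, φ x = 0 ↔ x ∈ CH.idl (KaehlerDifferential.D k Q f) :=
      fun x => Ideal.Quotient.eq_zero_iff_mem
    rw [← hφ, map_sub, sub_eq_zero]
    change φ.toLinearMap _ = φ.toLinearMap _
    rw [CH.strT_eq, CH.strT_eq]
    have e1 := fun e => LinearMap.congr_fun hα.1 e
    have e2 := fun e => LinearMap.congr_fun hα.2 e
    have e3 := fun e => LinearMap.congr_fun hβ.1 e
    have e4 := fun e => LinearMap.congr_fun hβ.2 e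
    have e5 := fun e => LinearMap.congr_fun hhE₀ e
    have e6 := fun e => LinearMap.congr_fun hhE₁ e
    have e7 := fun e => LinearMap.congr_fun hhF₀ e
    have e8 := fun e => LinearMap.congr_fun hhF₁ e
    simp only [LinearMap.comp_apply, LinearMap.add_apply, LinearMap.sub_apply,
      LinearMap.id_apply] at e1 e2 e3 e4 e5 e6 e7 e8
    refine CH.conn_core φ f ((hφ _).2 ⟨1, by simp⟩) ?_
      (CH.dual_bc p₀ p₁ s₀ s₁ hps₀ hps₁) (CH.dual_bc q₀ q₁ u₀ u₁ hqu₀ hqu₁)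
      (CH.pconn na0 na1) (CH.pconn nb0 nb1)
      (CH.od B A) (CH.sg Q E₀ E₁) (CH.od x y) (CH.od D C) (CH.sg Q F₀ F₁) (CH.od v w)
      ?_ ?_ ?_ ?_ (α₀.prodMap α₁) (β₀.prodMap β₁) ?_ ?_ ?_ ?_ ?_ AtE AtF
      (CH.pconn_At na0 na1 A B AtE At₁ At₀ hAt₁ hAt₀ hAtE)
      (CH.pconn_At nb0 nb1 C D AtF Bt₁ Bt₀ hBt₁ hBt₀ hAtF)
      (CH.sg_At AtE At₁ At₀ hAtE) (CH.sg_At AtF Bt₁ Bt₀ hAtF) i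
    · intro z hz
      have h2 : (algebraMap ℚ Q (1/2)) • (z + z) = z := by
        rw [← two_smul Q z, smul_smul]
        have : (algebraMap ℚ Q (1/2)) * (2 : Q) = 1 := by
          rw [← map_ofNat (algebraMap ℚ Q) 2, ← map_mul]; norm_num
        rw [this, one_smul]
      rw [← h2, hz, smul_zero]
    · intro e; ext <;> simp [hAB, hBA]
    · intro e; ext <;> simp [hCD, hDC]
    · ext <;> simp
    · ext <;> simp
    · ext <;> simp [e1, e2]
    · ext <;> simp [e3, e4]
    · ext <;> simp
    · ext <;> simp [e5, e6]
    · ext <;> simp [e7, e8]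
  have tot : (∑ i ∈ Finset.range (n + 1), (algebraMap ℚ Q (1 / (i.factorial : ℚ))) •
          strT Q p₀ s₀ p₁ s₁ (atIter k Q (E₀ × E₁) AtE i))
        - (∑ i ∈ Finset.range (n + 1), (algebraMap ℚ Q (1 / (i.factorial : ℚ))) •
            strT Q q₀ u₀ q₁ u₁ (atIter k Q (F₀ × F₁) AtF i))
        ∈ CH.idl (KaehlerDifferential.D k Q f) := by
    rw [← Finset.sum_sub_distrib]
    refine Ideal.sum_mem _ fun i _ => ?_
    rw [← smul_sub, Algebra.smul_def]
    exact Ideal.mul_mem_left _ _ (key i)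
  exact tot
end

section
/- Let k be a commutative ring containing ℚ, Q a smooth k-algebra of relative dimension n, and f ∈ Q. Let θ : P → R be a strict morphism of matrix factorizations of f, where P = (P₁, P₀, A, B) and R = (R₁, R₀, C, D), and let cone(θ) be the matrix factorization with modules R₁⊕P₀ and R₀⊕P₁ and differentials (in block form) [C, θ₀; 0, −B] and [D, θ₁; 0, −A]. Then ch(R) = ch(P) + ch(cone(θ)) in H₀((Ω•, df, n)_{ℤ/2}); concretely, choosing connections on P and R and the direct-sum connections on cone(θ), str(At²ⁱ_R) = str(At²ⁱ_P) + str(At²ⁱ_{cone(θ)}) in Ω^{2i} for every i. -/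
/-!
STATEMENT 14: Let k ⊇ ℚ and Q a smooth k-algebra of relative dimension n. For a strict
morphism θ : P → R of matrix factorizations of f, with cone(θ) the matrix factorization
with modules R₁⊕P₀, R₀⊕P₁ and differentials [C, θ₀; 0, −B], [D, θ₁; 0, −A], choosing
connections on P and R and the direct-sum connections on cone(θ), one has
str(At²ⁱ_R) = str(At²ⁱ_P) + str(At²ⁱ_{cone(θ)}) for every i (whence
ch(R) = ch(P) + ch(cone(θ)) in H₀((Ω•, df, n)_{ℤ/2})).
-/

open TensorProduct

universe u
variable (k Q : Type u) [CommRing k] [CommRing Q] [Algebra k Q]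

section Helpers

theorem aux_conn_zero {E : Type u} [AddCommGroup E] [Module Q E] (c : Conn k Q E) :
    c.toFun 0 = 0 := by
  have h := c.map_add 0 0
  rw [add_zero] at h
  exact left_eq_add.mp h

theorem aux_conn_neg {E : Type u} [AddCommGroup E] [Module Q E] (c : Conn k Q E) (x : E) :
    c.toFun (-x) = - c.toFun x := by
  have h := c.map_add x (-x)
  rw [add_neg_cancel, aux_conn_zero] at h
  exact (neg_eq_of_add_eq_zero_right h.symm).symm

theorem aux_expand {E : Type u} [AddCommGroup E] [Module Q E] {r : ℕ}
    (p : (Fin r → Q) →ₗ[Q] E) (s : E →ₗ[Q] (Fin r → Q)) (h : ∀ e, p (s e) = e) (x : E) :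
    x = ∑ j : Fin r, (s x j) • p (Pi.single j 1) := by
  conv_lhs => rw [← h x, pi_eq_sum_univ' (s x)]
  rw [map_sum]
  refine Finset.sum_congr rfl fun j _ => ?_
  rw [map_smul]

theorem aux_trC_eq {N E : Type u} [AddCommGroup N] [Module Q N]
    [AddCommGroup E] [Module Q E] {r : ℕ}
    (p : (Fin r → Q) →ₗ[Q] E) (s : E →ₗ[Q] (Fin r → Q))
    (g : E →ₗ[Q] N ⊗[Q] E) :
    trC Q p s g = ∑ j : Fin r, (TensorProduct.rid Q N)
      ((LinearMap.lTensor N ((LinearMap.proj j : (Fin r → Q) →ₗ[Q] Q) ∘ₗ s))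
        (g (p (Pi.single j 1)))) := by
  simp only [trC, LinearMap.lTensor_comp, LinearMap.comp_apply]

theorem aux_trC_add {N E : Type u} [AddCommGroup N] [Module Q N]
    [AddCommGroup E] [Module Q E] {r : ℕ}
    (p : (Fin r → Q) →ₗ[Q] E) (s : E →ₗ[Q] (Fin r → Q))
    (g g' : E →ₗ[Q] N ⊗[Q] E) :
    trC Q p s (g + g') = trC Q p s g + trC Q p s g' := by
  simp only [trC, LinearMap.add_apply, map_add, Finset.sum_add_distrib]

theorem aux_trC_cyc {N E F : Type u} [AddCommGroup N] [Module Q N]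
    [AddCommGroup E] [Module Q E] [AddCommGroup F] [Module Q F] {r r' : ℕ}
    (p : (Fin r → Q) →ₗ[Q] E) (s : E →ₗ[Q] (Fin r → Q)) (h : ∀ e, p (s e) = e)
    (p' : (Fin r' → Q) →ₗ[Q] F) (s' : F →ₗ[Q] (Fin r' → Q)) (h' : ∀ e, p' (s' e) = e)
    (u : E →ₗ[Q] F) (v : F →ₗ[Q] N ⊗[Q] E) :
    trC Q p s (v ∘ₗ u) = trC Q p' s' (LinearMap.lTensor N u ∘ₗ v) := by
  have h1 : ∀ j : Fin r, v (u (p (Pi.single j 1))) =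
      ∑ l : Fin r', (s' (u (p (Pi.single j 1))) l) • v (p' (Pi.single l 1)) := by
    intro j
    conv_lhs => rw [aux_expand Q p' s' h' (u (p (Pi.single j 1)))]
    simp only [map_sum, map_smul]
  have h2 : ∀ l : Fin r', (LinearMap.proj l : (Fin r' → Q) →ₗ[Q] Q) ∘ₗ s' ∘ₗ u =
      ∑ j : Fin r, (s' (u (p (Pi.single j 1))) l) •
        ((LinearMap.proj j : (Fin r → Q) →ₗ[Q] Q) ∘ₗ s) := by
    intro l
    ext x
    simp only [LinearMap.comp_apply, LinearMap.sum_apply, LinearMap.smul_apply,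
      LinearMap.proj_apply]
    conv_lhs => rw [aux_expand Q p s h x]
    simp only [map_sum, map_smul, Finset.sum_apply, Pi.smul_apply, smul_eq_mul]
    exact Finset.sum_congr rfl fun j _ => mul_comm _ _
  rw [aux_trC_eq, aux_trC_eq]
  have h3 : ∀ l : Fin r', ∀ w : N ⊗[Q] E,
      (LinearMap.lTensor N ((LinearMap.proj l : (Fin r' → Q) →ₗ[Q] Q) ∘ₗ s'))
        ((LinearMap.lTensor N u) w) =
      ∑ j : Fin r, (s' (u (p (Pi.single j 1))) l) •
        (LinearMap.lTensor N ((LinearMap.proj j : (Fin r → Q) →ₗ[Q] Q) ∘ₗ s)) w := by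
    intro l w
    rw [← LinearMap.comp_apply, ← LinearMap.lTensor_comp, LinearMap.comp_assoc, h2,
      ← LinearMap.coe_lTensorHom, map_sum, LinearMap.sum_apply]
    simp only [map_smul, LinearMap.smul_apply]
  simp only [LinearMap.comp_apply, h1, h3, map_sum, map_smul]
  exact Finset.sum_comm

theorem aux_trC_prod {N E F : Type u} [AddCommGroup N] [Module Q N]
    [AddCommGroup E] [Module Q E] [AddCommGroup F] [Module Q F] {r r' c : ℕ}
    (p : (Fin r → Q) →ₗ[Q] E) (s : E →ₗ[Q] (Fin r → Q)) (h : ∀ e, p (s e) = e)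
    (p' : (Fin r' → Q) →ₗ[Q] F) (s' : F →ₗ[Q] (Fin r' → Q)) (h' : ∀ e, p' (s' e) = e)
    (pc : (Fin c → Q) →ₗ[Q] (E × F)) (sc : (E × F) →ₗ[Q] (Fin c → Q))
    (hc : ∀ e, pc (sc e) = e)
    (g : (E × F) →ₗ[Q] N ⊗[Q] (E × F)) :
    trC Q pc sc g =
      trC Q p s (LinearMap.lTensor N (LinearMap.fst Q E F) ∘ₗ (g ∘ₗ LinearMap.inl Q E F)) +
      trC Q p' s' (LinearMap.lTensor N (LinearMap.snd Q E F) ∘ₗ (g ∘ₗ LinearMap.inr Q E F)) := by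
  rw [← aux_trC_cyc Q pc sc hc p s h, ← aux_trC_cyc Q pc sc hc p' s' h', ← aux_trC_add]
  congr 1
  apply LinearMap.ext
  rintro ⟨x, y⟩
  simp only [LinearMap.add_apply, LinearMap.comp_apply, LinearMap.fst_apply,
    LinearMap.snd_apply, LinearMap.inl_apply, LinearMap.inr_apply]
  rw [← map_add]
  simp

theorem aux_stepMul_nat {E F : Type u} [AddCommGroup E] [Module Q E] [AddCommGroup F]
    [Module Q F] (φ : E →ₗ[Q] F) :
    stepMul k Q F ∘ₗ LinearMap.lTensor _ (LinearMap.lTensor _ φ) =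
      LinearMap.lTensor _ φ ∘ₗ stepMul k Q E := by
  ext a w e
  simp [stepMul]

theorem aux_atIter_nat {E F : Type u} [AddCommGroup E] [Module Q E] [AddCommGroup F]
    [Module Q F] (φ : E →ₗ[Q] F) (AtE : E →ₗ[Q] Ω[Q⁄k] ⊗[Q] E) (AtF : F →ₗ[Q] Ω[Q⁄k] ⊗[Q] F)
    (c : Q) (h : AtF ∘ₗ φ = c • (LinearMap.lTensor _ φ ∘ₗ AtE)) (i : ℕ) :
    atIter k Q F AtF i ∘ₗ φ = c ^ i • (LinearMap.lTensor _ φ ∘ₗ atIter k Q E AtE i) := by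
  induction i with
  | zero =>
    ext e
    simp [atIter]
  | succ i ih =>
    simp only [atIter]
    have key : LinearMap.lTensor (ExteriorAlgebra Q (Ω[Q⁄k])) AtF ∘ₗ LinearMap.lTensor _ φ =
        c • (LinearMap.lTensor _ (LinearMap.lTensor _ φ) ∘ₗ LinearMap.lTensor _ AtE) := by
      rw [← LinearMap.lTensor_comp, h, LinearMap.lTensor_smul, LinearMap.lTensor_comp]
    apply LinearMap.ext
    intro x
    have a1 := LinearMap.congr_fun ih x
    have a2 := fun w => LinearMap.congr_fun key w
    have a3 := fun w => LinearMap.congr_fun (aux_stepMul_nat k Q φ) w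
    simp only [LinearMap.comp_apply, LinearMap.smul_apply] at a1 a2 a3 ⊢
    rw [a1, map_smul, a2, map_smul, map_smul, a3, smul_smul, pow_succ]

end Helpers

theorem chern_character_additive_on_cones
    [Algebra ℚ k] [Algebra ℚ Q] [IsScalarTower ℚ k Q]
    (n : ℕ) [Algebra.Smooth k Q]
    (hdim : ∀ ω : Fin (n + 1) → Ω[Q⁄k],
      (List.ofFn (fun t => ExteriorAlgebra.ι Q (ω t))).prod = 0)
    (P₀ P₁ R₀ R₁ : Type u)
    [AddCommGroup P₀] [Module Q P₀] [AddCommGroup P₁] [Module Q P₁]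
    [AddCommGroup R₀] [Module Q R₀] [AddCommGroup R₁] [Module Q R₁]
    [Module.Finite Q P₀] [Module.Projective Q P₀]
    [Module.Finite Q P₁] [Module.Projective Q P₁]
    [Module.Finite Q R₀] [Module.Projective Q R₀]
    [Module.Finite Q R₁] [Module.Projective Q R₁]
    -- presentations as retracts of finite free modules
    {a₀ a₁ b₀ b₁ c₀ c₁ : ℕ}
    (pP₀ : (Fin a₀ → Q) →ₗ[Q] P₀) (sP₀ : P₀ →ₗ[Q] (Fin a₀ → Q)) (hP₀ : ∀ e, pP₀ (sP₀ e) = e)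
    (pP₁ : (Fin a₁ → Q) →ₗ[Q] P₁) (sP₁ : P₁ →ₗ[Q] (Fin a₁ → Q)) (hP₁ : ∀ e, pP₁ (sP₁ e) = e)
    (pR₀ : (Fin b₀ → Q) →ₗ[Q] R₀) (sR₀ : R₀ →ₗ[Q] (Fin b₀ → Q)) (hR₀ : ∀ e, pR₀ (sR₀ e) = e)
    (pR₁ : (Fin b₁ → Q) →ₗ[Q] R₁) (sR₁ : R₁ →ₗ[Q] (Fin b₁ → Q)) (hR₁ : ∀ e, pR₁ (sR₁ e) = e)
    (pC₀ : (Fin c₀ → Q) →ₗ[Q] (R₀ × P₁)) (sC₀ : (R₀ × P₁) →ₗ[Q] (Fin c₀ → Q))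
    (hC₀ : ∀ e, pC₀ (sC₀ e) = e)
    (pC₁ : (Fin c₁ → Q) →ₗ[Q] (R₁ × P₀)) (sC₁ : (R₁ × P₀) →ₗ[Q] (Fin c₁ → Q))
    (hC₁ : ∀ e, pC₁ (sC₁ e) = e)
    (f : Q)
    -- the matrix factorization P = (P₁ -A→ P₀ -B→ P₁)
    (A : P₁ →ₗ[Q] P₀) (B : P₀ →ₗ[Q] P₁)
    (hAB : ∀ y, A (B y) = f • y) (hBA : ∀ x, B (A x) = f • x)
    -- the matrix factorization R = (R₁ -C→ R₀ -D→ R₁)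
    (C : R₁ →ₗ[Q] R₀) (D : R₀ →ₗ[Q] R₁)
    (hCD : ∀ y, C (D y) = f • y) (hDC : ∀ x, D (C x) = f • x)
    -- a strict morphism θ : P → R
    (θ₀ : P₀ →ₗ[Q] R₀) (θ₁ : P₁ →ₗ[Q] R₁)
    (hθ : C ∘ₗ θ₁ = θ₀ ∘ₗ A ∧ D ∘ₗ θ₀ = θ₁ ∘ₗ B)
    -- the differentials of cone(θ)
    (Ac : (R₁ × P₀) →ₗ[Q] (R₀ × P₁)) (Bc : (R₀ × P₁) →ₗ[Q] (R₁ × P₀))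
    (hAc : ∀ z : R₁ × P₀, Ac z = (C z.1 + θ₀ z.2, - B z.2))
    (hBc : ∀ z : R₀ × P₁, Bc z = (D z.1 + θ₁ z.2, - A z.2))
    -- connections on P, R, and the direct-sum connections on cone(θ)
    (naP0 : Conn k Q P₀) (naP1 : Conn k Q P₁) (naR0 : Conn k Q R₀) (naR1 : Conn k Q R₁)
    (naC0 : Conn k Q (R₀ × P₁)) (naC1 : Conn k Q (R₁ × P₀))
    (hnaC0 : ∀ z : R₀ × P₁, naC0.toFun z =
      (LinearMap.lTensor (Ω[Q⁄k]) (LinearMap.inl Q R₀ P₁)) (naR0.toFun z.1)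
        + (LinearMap.lTensor (Ω[Q⁄k]) (LinearMap.inr Q R₀ P₁)) (naP1.toFun z.2))
    (hnaC1 : ∀ z : R₁ × P₀, naC1.toFun z =
      (LinearMap.lTensor (Ω[Q⁄k]) (LinearMap.inl Q R₁ P₀)) (naR1.toFun z.1)
        + (LinearMap.lTensor (Ω[Q⁄k]) (LinearMap.inr Q R₁ P₀)) (naP0.toFun z.2))
    -- the Atiyah classes of P, R and cone(θ)
    (AtP₁ : P₁ →ₗ[Q] Ω[Q⁄k] ⊗[Q] P₀) (AtP₀ : P₀ →ₗ[Q] Ω[Q⁄k] ⊗[Q] P₁)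
    (hAtP₁ : ∀ e, AtP₁ e = naP0.toFun (A e) - (LinearMap.lTensor (Ω[Q⁄k]) A) (naP1.toFun e))
    (hAtP₀ : ∀ e, AtP₀ e = naP1.toFun (B e) - (LinearMap.lTensor (Ω[Q⁄k]) B) (naP0.toFun e))
    (AtP : (P₀ × P₁) →ₗ[Q] Ω[Q⁄k] ⊗[Q] (P₀ × P₁))
    (hAtP : AtP = (LinearMap.lTensor (Ω[Q⁄k]) (LinearMap.inr Q P₀ P₁)) ∘ₗ AtP₀ ∘ₗ
          LinearMap.fst Q P₀ P₁
        + (LinearMap.lTensor (Ω[Q⁄k]) (LinearMap.inl Q P₀ P₁)) ∘ₗ AtP₁ ∘ₗ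
          LinearMap.snd Q P₀ P₁)
    (AtR₁ : R₁ →ₗ[Q] Ω[Q⁄k] ⊗[Q] R₀) (AtR₀ : R₀ →ₗ[Q] Ω[Q⁄k] ⊗[Q] R₁)
    (hAtR₁ : ∀ e, AtR₁ e = naR0.toFun (C e) - (LinearMap.lTensor (Ω[Q⁄k]) C) (naR1.toFun e))
    (hAtR₀ : ∀ e, AtR₀ e = naR1.toFun (D e) - (LinearMap.lTensor (Ω[Q⁄k]) D) (naR0.toFun e))
    (AtR : (R₀ × R₁) →ₗ[Q] Ω[Q⁄k] ⊗[Q] (R₀ × R₁))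
    (hAtR : AtR = (LinearMap.lTensor (Ω[Q⁄k]) (LinearMap.inr Q R₀ R₁)) ∘ₗ AtR₀ ∘ₗ
          LinearMap.fst Q R₀ R₁
        + (LinearMap.lTensor (Ω[Q⁄k]) (LinearMap.inl Q R₀ R₁)) ∘ₗ AtR₁ ∘ₗ
          LinearMap.snd Q R₀ R₁)
    (AtC₁ : (R₁ × P₀) →ₗ[Q] Ω[Q⁄k] ⊗[Q] (R₀ × P₁))
    (AtC₀ : (R₀ × P₁) →ₗ[Q] Ω[Q⁄k] ⊗[Q] (R₁ × P₀))
    (hAtC₁ : ∀ e, AtC₁ e = naC0.toFun (Ac e) - (LinearMap.lTensor (Ω[Q⁄k]) Ac) (naC1.toFun e))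
    (hAtC₀ : ∀ e, AtC₀ e = naC1.toFun (Bc e) - (LinearMap.lTensor (Ω[Q⁄k]) Bc) (naC0.toFun e))
    (AtC : ((R₀ × P₁) × (R₁ × P₀)) →ₗ[Q] Ω[Q⁄k] ⊗[Q] ((R₀ × P₁) × (R₁ × P₀)))
    (hAtC : AtC = (LinearMap.lTensor (Ω[Q⁄k]) (LinearMap.inr Q (R₀ × P₁) (R₁ × P₀))) ∘ₗ AtC₀ ∘ₗ
          LinearMap.fst Q (R₀ × P₁) (R₁ × P₀)
        + (LinearMap.lTensor (Ω[Q⁄k]) (LinearMap.inl Q (R₀ × P₁) (R₁ × P₀))) ∘ₗ AtC₁ ∘ₗ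
          LinearMap.snd Q (R₀ × P₁) (R₁ × P₀)) :
    ∀ i : ℕ,
      strT Q pR₀ sR₀ pR₁ sR₁ (atIter k Q (R₀ × R₁) AtR (2 * i))
        = strT Q pP₀ sP₀ pP₁ sP₁ (atIter k Q (P₀ × P₁) AtP (2 * i))
          + strT Q pC₀ sC₀ pC₁ sC₁ (atIter k Q ((R₀ × P₁) × (R₁ × P₀)) AtC (2 * i)) := by
  intro i
  -- components of the Atiyah class of the cone
  have hB1 : Bc ∘ₗ LinearMap.inl Q R₀ P₁ = LinearMap.inl Q R₁ P₀ ∘ₗ D := by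
    ext x <;> simp [hBc]
  have hA1 : Ac ∘ₗ LinearMap.inl Q R₁ P₀ = LinearMap.inl Q R₀ P₁ ∘ₗ C := by
    ext x <;> simp [hAc]
  have hB2 : LinearMap.snd Q R₁ P₀ ∘ₗ Bc = -(A ∘ₗ LinearMap.snd Q R₀ P₁) := by
    apply LinearMap.ext; intro x; simp [hBc]
  have hA2 : LinearMap.snd Q R₀ P₁ ∘ₗ Ac = -(B ∘ₗ LinearMap.snd Q R₁ P₀) := by
    apply LinearMap.ext; intro x; simp [hAc]
  have e1 : ∀ x : R₀, AtC₀ (x, 0) =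
      LinearMap.lTensor (Ω[Q⁄k]) (LinearMap.inl Q R₁ P₀) (AtR₀ x) := by
    intro x
    rw [hAtC₀, hAtR₀, hBc, hnaC1, hnaC0]
    simp only [map_zero, add_zero, neg_zero, aux_conn_zero, map_sub]
    rw [← LinearMap.comp_apply, ← LinearMap.lTensor_comp, hB1, LinearMap.lTensor_comp,
      LinearMap.comp_apply]
  have e2 : ∀ x : R₁, AtC₁ (x, 0) =
      LinearMap.lTensor (Ω[Q⁄k]) (LinearMap.inl Q R₀ P₁) (AtR₁ x) := by
    intro x
    rw [hAtC₁, hAtR₁, hAc, hnaC0, hnaC1]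
    simp only [map_zero, add_zero, neg_zero, aux_conn_zero, map_sub]
    rw [← LinearMap.comp_apply, ← LinearMap.lTensor_comp, hA1, LinearMap.lTensor_comp,
      LinearMap.comp_apply]
  have sC1 : ∀ z, LinearMap.lTensor (Ω[Q⁄k]) (LinearMap.snd Q R₁ P₀) (naC1.toFun z) =
      naP0.toFun z.2 := by
    intro z
    rw [hnaC1, map_add, ← LinearMap.comp_apply, ← LinearMap.comp_apply,
      ← LinearMap.lTensor_comp, ← LinearMap.lTensor_comp, LinearMap.snd_comp_inl,
      LinearMap.snd_comp_inr]
    simp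
  have sC0 : ∀ z, LinearMap.lTensor (Ω[Q⁄k]) (LinearMap.snd Q R₀ P₁) (naC0.toFun z) =
      naP1.toFun z.2 := by
    intro z
    rw [hnaC0, map_add, ← LinearMap.comp_apply, ← LinearMap.comp_apply,
      ← LinearMap.lTensor_comp, ← LinearMap.lTensor_comp, LinearMap.snd_comp_inl,
      LinearMap.snd_comp_inr]
    simp
  have e3 : ∀ z, LinearMap.lTensor (Ω[Q⁄k]) (LinearMap.snd Q R₁ P₀) (AtC₀ z) =
      - AtP₁ z.2 := by
    intro z
    rw [hAtC₀, hAtP₁, map_sub, sC1, hBc, ← LinearMap.comp_apply (LinearMap.lTensor _ _),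
      ← LinearMap.lTensor_comp, hB2, LinearMap.lTensor_neg, LinearMap.lTensor_comp,
      LinearMap.neg_apply, LinearMap.comp_apply, sC0, aux_conn_neg]
    abel
  have e4 : ∀ z, LinearMap.lTensor (Ω[Q⁄k]) (LinearMap.snd Q R₀ P₁) (AtC₁ z) =
      - AtP₀ z.2 := by
    intro z
    rw [hAtC₁, hAtP₀, map_sub, sC0, hAc, ← LinearMap.comp_apply (LinearMap.lTensor _ _),
      ← LinearMap.lTensor_comp, hA2, LinearMap.lTensor_neg, LinearMap.lTensor_comp,
      LinearMap.neg_apply, LinearMap.comp_apply, sC1, aux_conn_neg]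
    abel
  -- the inclusion of R and the projection to P
  let φ : (R₀ × R₁) →ₗ[Q] ((R₀ × P₁) × (R₁ × P₀)) :=
    LinearMap.prodMap (LinearMap.inl Q R₀ P₁) (LinearMap.inl Q R₁ P₀)
  let ψ : ((R₀ × P₁) × (R₁ × P₀)) →ₗ[Q] (P₀ × P₁) :=
    LinearMap.prod (LinearMap.snd Q R₁ P₀ ∘ₗ LinearMap.snd Q (R₀ × P₁) (R₁ × P₀))
      (LinearMap.snd Q R₀ P₁ ∘ₗ LinearMap.fst Q (R₀ × P₁) (R₁ × P₀))
  have lc : ∀ {X Y Z : Type u} [AddCommGroup X] [AddCommGroup Y] [AddCommGroup Z]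
      [Module Q X] [Module Q Y] [Module Q Z] (a : Y →ₗ[Q] Z) (b : X →ₗ[Q] Y)
      (w : Ω[Q⁄k] ⊗[Q] X), LinearMap.lTensor (Ω[Q⁄k]) a (LinearMap.lTensor (Ω[Q⁄k]) b w) =
        LinearMap.lTensor (Ω[Q⁄k]) (a ∘ₗ b) w := by
    intros
    rw [LinearMap.lTensor_comp, LinearMap.comp_apply]
  have hφ : AtC ∘ₗ φ = (1 : Q) • (LinearMap.lTensor _ φ ∘ₗ AtR) := by
    rw [one_smul, hAtC, hAtR]
    apply LinearMap.ext
    rintro ⟨x, y⟩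
    have f1 : φ ∘ₗ LinearMap.inr Q R₀ R₁ =
        LinearMap.inr Q (R₀ × P₁) (R₁ × P₀) ∘ₗ LinearMap.inl Q R₁ P₀ := by
      apply LinearMap.ext; intro x; simp [φ]
    have f2 : φ ∘ₗ LinearMap.inl Q R₀ R₁ =
        LinearMap.inl Q (R₀ × P₁) (R₁ × P₀) ∘ₗ LinearMap.inl Q R₀ P₁ := by
      apply LinearMap.ext; intro x; simp [φ]
    have f3 : φ (x, y) = ((x, 0), (y, 0)) := rfl
    simp only [LinearMap.add_apply, LinearMap.comp_apply, map_add, lc, f1, f2, f3,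
      LinearMap.fst_apply, LinearMap.snd_apply, e1, e2]
  have hψ : AtP ∘ₗ ψ = (-1 : Q) • (LinearMap.lTensor _ ψ ∘ₗ AtC) := by
    rw [hAtC, hAtP]
    apply LinearMap.ext
    intro z
    have f1 : ψ ∘ₗ LinearMap.inr Q (R₀ × P₁) (R₁ × P₀) =
        LinearMap.inl Q P₀ P₁ ∘ₗ LinearMap.snd Q R₁ P₀ := by
      apply LinearMap.ext; intro x; simp [ψ]
    have f2 : ψ ∘ₗ LinearMap.inl Q (R₀ × P₁) (R₁ × P₀) =
        LinearMap.inr Q P₀ P₁ ∘ₗ LinearMap.snd Q R₀ P₁ := by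
      apply LinearMap.ext; intro x; simp [ψ]
    have f3 : ψ z = (z.2.2, z.1.2) := rfl
    simp only [LinearMap.add_apply, LinearMap.comp_apply, LinearMap.smul_apply, map_add, lc,
      f1, f2, f3, LinearMap.fst_apply, LinearMap.snd_apply]
    simp only [← lc, e3, e4, map_neg, neg_smul, one_smul]
    abel
  have hφi := aux_atIter_nat k Q φ AtR AtC 1 hφ (2 * i)
  have hψi := aux_atIter_nat k Q ψ AtC AtP (-1) hψ (2 * i)
  rw [one_pow, one_smul] at hφi
  rw [pow_mul, neg_one_sq, one_pow, one_smul] at hψi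
  generalize atIter k Q (R₀ × R₁) AtR (2 * i) = TR at *
  generalize atIter k Q (P₀ × P₁) AtP (2 * i) = TP at *
  generalize atIter k Q ((R₀ × P₁) × (R₁ × P₀)) AtC (2 * i) = TC at *
  unfold strT
  rw [aux_trC_prod Q pR₀ sR₀ hR₀ pP₁ sP₁ hP₁ pC₀ sC₀ hC₀,
    aux_trC_prod Q pR₁ sR₁ hR₁ pP₀ sP₀ hP₀ pC₁ sC₁ hC₁]
  have lc' : ∀ {X Y Z : Type u} [AddCommGroup X] [AddCommGroup Y] [AddCommGroup Z]
      [Module Q X] [Module Q Y] [Module Q Z] (a : Y →ₗ[Q] Z) (b : X →ₗ[Q] Y)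
      (w : ExteriorAlgebra Q (Ω[Q⁄k]) ⊗[Q] X),
      LinearMap.lTensor (ExteriorAlgebra Q (Ω[Q⁄k])) a
        (LinearMap.lTensor (ExteriorAlgebra Q (Ω[Q⁄k])) b w) =
        LinearMap.lTensor (ExteriorAlgebra Q (Ω[Q⁄k])) (a ∘ₗ b) w := by
    intros
    rw [LinearMap.lTensor_comp, LinearMap.comp_apply]
  have hφx : ∀ x, TC (φ x) = LinearMap.lTensor _ φ (TR x) := fun x => LinearMap.congr_fun hφi x
  have hψx : ∀ x, TP (ψ x) = LinearMap.lTensor _ ψ (TC x) := fun x => LinearMap.congr_fun hψi x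
  have g1 : LinearMap.lTensor (ExteriorAlgebra Q (Ω[Q⁄k])) (LinearMap.fst Q R₀ P₁) ∘ₗ
      ((LinearMap.lTensor _ (LinearMap.fst Q (R₀ × P₁) (R₁ × P₀)) ∘ₗ TC ∘ₗ
        LinearMap.inl Q (R₀ × P₁) (R₁ × P₀)) ∘ₗ LinearMap.inl Q R₀ P₁) =
      LinearMap.lTensor _ (LinearMap.fst Q R₀ R₁) ∘ₗ TR ∘ₗ LinearMap.inl Q R₀ R₁ := by
    apply LinearMap.ext
    intro x
    have t : LinearMap.inl Q (R₀ × P₁) (R₁ × P₀) (LinearMap.inl Q R₀ P₁ x) =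
      φ (LinearMap.inl Q R₀ R₁ x) := rfl
    simp only [LinearMap.comp_apply, t, hφx, lc']
    rfl
  have g2 : LinearMap.lTensor (ExteriorAlgebra Q (Ω[Q⁄k])) (LinearMap.fst Q R₁ P₀) ∘ₗ
      ((LinearMap.lTensor _ (LinearMap.snd Q (R₀ × P₁) (R₁ × P₀)) ∘ₗ TC ∘ₗ
        LinearMap.inr Q (R₀ × P₁) (R₁ × P₀)) ∘ₗ LinearMap.inl Q R₁ P₀) =
      LinearMap.lTensor _ (LinearMap.snd Q R₀ R₁) ∘ₗ TR ∘ₗ LinearMap.inr Q R₀ R₁ := by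
    apply LinearMap.ext
    intro x
    have t : LinearMap.inr Q (R₀ × P₁) (R₁ × P₀) (LinearMap.inl Q R₁ P₀ x) =
      φ (LinearMap.inr Q R₀ R₁ x) := rfl
    simp only [LinearMap.comp_apply, t, hφx, lc']
    rfl
  have g3 : LinearMap.lTensor (ExteriorAlgebra Q (Ω[Q⁄k])) (LinearMap.snd Q R₀ P₁) ∘ₗ
      ((LinearMap.lTensor _ (LinearMap.fst Q (R₀ × P₁) (R₁ × P₀)) ∘ₗ TC ∘ₗ
        LinearMap.inl Q (R₀ × P₁) (R₁ × P₀)) ∘ₗ LinearMap.inr Q R₀ P₁) =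
      LinearMap.lTensor _ (LinearMap.snd Q P₀ P₁) ∘ₗ TP ∘ₗ LinearMap.inr Q P₀ P₁ := by
    apply LinearMap.ext
    intro x
    have t : LinearMap.inr Q P₀ P₁ x =
      ψ (LinearMap.inl Q (R₀ × P₁) (R₁ × P₀) (LinearMap.inr Q R₀ P₁ x)) := rfl
    simp only [LinearMap.comp_apply, t, hψx, lc']
    rfl
  have g4 : LinearMap.lTensor (ExteriorAlgebra Q (Ω[Q⁄k])) (LinearMap.snd Q R₁ P₀) ∘ₗ
      ((LinearMap.lTensor _ (LinearMap.snd Q (R₀ × P₁) (R₁ × P₀)) ∘ₗ TC ∘ₗ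
        LinearMap.inr Q (R₀ × P₁) (R₁ × P₀)) ∘ₗ LinearMap.inr Q R₁ P₀) =
      LinearMap.lTensor _ (LinearMap.fst Q P₀ P₁) ∘ₗ TP ∘ₗ LinearMap.inl Q P₀ P₁ := by
    apply LinearMap.ext
    intro x
    have t : LinearMap.inl Q P₀ P₁ x =
      ψ (LinearMap.inr Q (R₀ × P₁) (R₁ × P₀) (LinearMap.inr Q R₁ P₀ x)) := rfl
    simp only [LinearMap.comp_apply, t, hψx, lc']
    rfl
  rw [g1, g2, g3, g4]
  abel
end

section
/- Let k be a commutative ring, φ : R → S a homomorphism of commutative k-algebras with φ(f) = g, and E = (E₁, E₀, A, B) a matrix factorization of f over R with connections ∇₀, ∇₁ on E₀, E₁. Endow the base-changed matrix factorization φ_*(E) = (E₁⊗_R S, E₀⊗_R S, A⊗1, B⊗1) of g over S with the induced connections ∇ᵢ⊗1 + 1⊗d_{S/k}. Then the Atiyah class of φ_*(E) is the base change of the Atiyah class of E: the component (E₁⊗_R S) → Ω¹_{S/k} ⊗ (E₀⊗_R S) equals (μ⊗1)∘((∇₀∘A − (1⊗A)∘∇₁)⊗1_S), and likewise in the other degree,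 where μ : Ω¹_{R/k}⊗_R S → Ω¹_{S/k} is the canonical map; consequently, if R and S are smooth k-algebras of the same relative dimension n and ℚ ⊆ k, then ch(φ_*(E)) = φ_*(ch(E)). -/
/-!
STATEMENT 19: Let φ : R → S be a homomorphism of commutative k-algebras with φ(f) = g,
and E = (E₁, E₀, A, B) a matrix factorization of f over R with connections ∇₀, ∇₁.
Endow the base change φ_*(E) = (E₁⊗S, E₀⊗S, A⊗1, B⊗1) with the induced connections
∇ᵢ⊗1 + 1⊗d_{S/k}.  Then the Atiyah class of φ_*(E) is the base change of the Atiyah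
class of E (componentwise, via the canonical map μ : Ω¹_{R/k} → Ω¹_{S/k}); consequently,
if moreover ℚ ⊆ k and R, S are smooth k-algebras of the same relative dimension n, then
ch(φ_*(E)) = φ_*(ch(E)) (equality modulo the image of dg∧, φ_* on forms being induced
by μ).
-/

open TensorProduct

universe u
variable (k Q : Type u) [CommRing k] [CommRing Q] [Algebra k Q]

section Helpers

variable {k Q} {S : Type u} [CommRing S] [Algebra k S] [Algebra Q S]

/-- Naturality of `lTensor` with respect to semilinear comparison maps. -/
theorem lTensor_map_nat {N N' E E' F F' : Type u}
    [AddCommGroup N] [Module Q N] [AddCommGroup N'] [Module S N']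
    [AddCommGroup E] [Module Q E] [AddCommGroup E'] [Module S E']
    [AddCommGroup F] [Module Q F] [AddCommGroup F'] [Module S F']
    (m : N →ₛₗ[algebraMap Q S] N') (β : E →ₛₗ[algebraMap Q S] E')
    (γ : F →ₛₗ[algebraMap Q S] F') (h : E →ₗ[Q] F) (h' : E' →ₗ[S] F')
    (hh : ∀ x, h' (β x) = γ (h x)) (z : N ⊗[Q] E) :
    LinearMap.lTensor N' h' (TensorProduct.map m β z)
      = TensorProduct.map m γ (LinearMap.lTensor N h z) := by
  induction z using TensorProduct.induction_on with
  | zero => simp only [map_zero]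
  | tmul x y => simp only [TensorProduct.map_tmul, LinearMap.lTensor_tmul, hh]
  | add x y hx hy => simp only [map_add, hx, hy]

theorem stepMul_nat {E E' : Type u}
    [AddCommGroup E] [Module Q E] [AddCommGroup E'] [Module S E']
    (m : Ω[Q⁄k] →ₛₗ[algebraMap Q S] Ω[S⁄k])
    (Φ : ExteriorAlgebra Q (Ω[Q⁄k]) →ₛₗ[algebraMap Q S] ExteriorAlgebra S (Ω[S⁄k]))
    (hmul : ∀ a b, Φ (a * b) = Φ a * Φ b)
    (hι : ∀ ω, Φ (ExteriorAlgebra.ι Q ω) = ExteriorAlgebra.ι S (m ω))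
    (β : E →ₛₗ[algebraMap Q S] E')
    (z : ExteriorAlgebra Q (Ω[Q⁄k]) ⊗[Q] (Ω[Q⁄k] ⊗[Q] E)) :
    stepMul k S E' (TensorProduct.map Φ (TensorProduct.map m β) z)
      = TensorProduct.map Φ β (stepMul k Q E z) := by
  induction z using TensorProduct.induction_on with
  | zero => simp only [map_zero]
  | add x y hx hy => simp only [map_add, hx, hy]
  | tmul a y =>
    induction y using TensorProduct.induction_on with
    | zero => simp only [TensorProduct.tmul_zero, map_zero]
    | add x y hx hy => simp only [TensorProduct.tmul_add, map_add, hx, hy]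
    | tmul ω e =>
      simp [stepMul, hmul, hι]

theorem atIter_nat {E E' : Type u}
    [AddCommGroup E] [Module Q E] [AddCommGroup E'] [Module S E']
    (m : Ω[Q⁄k] →ₛₗ[algebraMap Q S] Ω[S⁄k])
    (Φ : ExteriorAlgebra Q (Ω[Q⁄k]) →ₛₗ[algebraMap Q S] ExteriorAlgebra S (Ω[S⁄k]))
    (hone : Φ 1 = 1)
    (hmul : ∀ a b, Φ (a * b) = Φ a * Φ b)
    (hι : ∀ ω, Φ (ExteriorAlgebra.ι Q ω) = ExteriorAlgebra.ι S (m ω))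
    (β : E →ₛₗ[algebraMap Q S] E')
    (At : E →ₗ[Q] Ω[Q⁄k] ⊗[Q] E) (At' : E' →ₗ[S] Ω[S⁄k] ⊗[S] E')
    (hAt : ∀ x, At' (β x) = TensorProduct.map m β (At x)) (i : ℕ) (x : E) :
    atIter k S E' At' i (β x) = TensorProduct.map Φ β (atIter k Q E At i x) := by
  induction i with
  | zero => simp [atIter, hone]
  | succ i ih =>
    simp only [atIter, LinearMap.comp_apply, ih]
    rw [lTensor_map_nat Φ β (TensorProduct.map m β) At At' hAt,
      stepMul_nat m Φ hmul hι]

/-- Contraction of `g : E → N ⊗ E` with a functional. -/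
noncomputable def contr {N E : Type u} [AddCommGroup N] [Module Q N]
    [AddCommGroup E] [Module Q E] (g : E →ₗ[Q] N ⊗[Q] E) :
    (E →ₗ[Q] Q) →ₗ[Q] E →ₗ[Q] N where
  toFun ψ := (TensorProduct.rid Q N).toLinearMap ∘ₗ LinearMap.lTensor N ψ ∘ₗ g
  map_add' a b := by
    ext x; simp [LinearMap.lTensor_add]
  map_smul' c a := by
    ext x; simp [LinearMap.lTensor_smul]

theorem trC_eq_contr {N E : Type u} [AddCommGroup N] [Module Q N]
    [AddCommGroup E] [Module Q E] {r : ℕ}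
    (p : (Fin r → Q) →ₗ[Q] E) (s : E →ₗ[Q] (Fin r → Q)) (g : E →ₗ[Q] N ⊗[Q] E) :
    trC Q p s g = ∑ j, contr g (LinearMap.proj j ∘ₗ s) (p (Pi.single j 1)) := by
  simp [trC, contr, LinearMap.lTensor_comp]

theorem sum_retract {E : Type u} [AddCommGroup E] [Module Q E] {r : ℕ}
    (p : (Fin r → Q) →ₗ[Q] E) (s : E →ₗ[Q] (Fin r → Q)) (h : ∀ e, p (s e) = e) (e : E) :
    ∑ j, s e j • p (Pi.single j 1) = e := by
  conv_rhs => rw [← h e, pi_eq_sum_univ' (s e), map_sum]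
  refine Finset.sum_congr rfl fun j _ => ?_
  rw [← map_smul]

/-- The bilinear trace does not depend on the dual basis. -/
theorem sum_bilin_indep {N E : Type u} [AddCommGroup N] [Module Q N]
    [AddCommGroup E] [Module Q E] {r t : ℕ} (c : (E →ₗ[Q] Q) →ₗ[Q] E →ₗ[Q] N)
    (u : Fin r → (E →ₗ[Q] Q)) (q : Fin r → E) (h : ∀ e, ∑ j, u j e • q j = e)
    (u' : Fin t → (E →ₗ[Q] Q)) (q' : Fin t → E) (h' : ∀ e, ∑ j, u' j e • q' j = e) :
    ∑ j, c (u j) (q j) = ∑ i, c (u' i) (q' i) := by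
  have hu : ∀ j, u j = ∑ i, u j (q' i) • u' i := by
    intro j
    ext e
    conv_lhs => rw [← h' e]
    simp [mul_comm]
  calc ∑ j, c (u j) (q j) = ∑ j, ∑ i, u j (q' i) • c (u' i) (q j) := by
        refine Finset.sum_congr rfl fun j _ => ?_
        conv_lhs => rw [hu j]
        simp
    _ = ∑ i, ∑ j, u j (q' i) • c (u' i) (q j) := Finset.sum_comm
    _ = ∑ i, c (u' i) (q' i) := by
        refine Finset.sum_congr rfl fun i _ => ?_
        conv_rhs => rw [← h (q' i)]
        simp

/-- The unit map `E → S ⊗ E` as a semilinear map. -/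
noncomputable def unitS (S : Type u) [CommRing S] [Algebra Q S]
    (E : Type u) [AddCommGroup E] [Module Q E] :
    E →ₛₗ[algebraMap Q S] S ⊗[Q] E where
  toFun e := 1 ⊗ₜ e
  map_add' := TensorProduct.tmul_add _
  map_smul' r e := by simp

theorem trC_nat {N N' E : Type u}
    [AddCommGroup N] [Module Q N] [AddCommGroup N'] [Module S N']
    [AddCommGroup E] [Module Q E] {r t : ℕ}
    (p : (Fin r → Q) →ₗ[Q] E) (s : E →ₗ[Q] (Fin r → Q)) (hps : ∀ e, p (s e) = e)
    (q : (Fin t → S) →ₗ[S] (S ⊗[Q] E)) (v : (S ⊗[Q] E) →ₗ[S] (Fin t → S))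
    (hqv : ∀ e, q (v e) = e)
    (m : N →ₛₗ[algebraMap Q S] N')
    (T : E →ₗ[Q] N ⊗[Q] E) (T' : (S ⊗[Q] E) →ₗ[S] N' ⊗[S] (S ⊗[Q] E))
    (hT : ∀ x, T' (unitS S E x) = TensorProduct.map m (unitS S E) (T x)) :
    trC S q v T' = m (trC Q p s T) := by
  rw [trC_eq_contr, trC_eq_contr, map_sum]
  rw [sum_bilin_indep (contr T') (fun j => LinearMap.proj j ∘ₗ v)
    (fun j => q (Pi.single j 1)) (fun e => sum_retract q v hqv e)
    (fun i => (TensorProduct.AlgebraTensorModule.rid Q S S).toLinearMap ∘ₗ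
      LinearMap.baseChange S (LinearMap.proj i ∘ₗ s))
    (fun i => unitS S E (p (Pi.single i 1))) ?_]
  · refine Finset.sum_congr rfl fun i _ => ?_
    simp only [contr, LinearMap.coe_mk, AddHom.coe_mk, LinearMap.comp_apply, hT]
    generalize T (p (Pi.single i 1)) = z
    induction z using TensorProduct.induction_on with
    | zero => simp only [map_zero]
    | add x y hx hy => simp only [map_add, hx, hy]
    | tmul x y => simp [unitS, Algebra.smul_def]
  · intro e
    induction e using TensorProduct.induction_on with
    | zero => simp
    | add x y hx hy =>
      simp only [map_add, add_smul, Finset.sum_add_distrib, hx, hy]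
    | tmul a e =>
      conv_rhs => rw [← sum_retract p s hps e]
      simp [unitS, TensorProduct.tmul_sum, TensorProduct.smul_tmul',
        TensorProduct.tmul_smul]

end Helpers

theorem atiyah_class_and_chern_character_functorial
    -- S is another k-algebra; φ = algebraMap R S is a k-algebra homomorphism
    (S : Type u) [CommRing S] [Algebra k S] [Algebra Q S] [IsScalarTower k Q S]
    [Algebra ℚ k] [Algebra ℚ Q] [Algebra ℚ S] [IsScalarTower ℚ k Q] [IsScalarTower ℚ k S]
    -- R (named Q here) and S are smooth k-algebras of the same relative dimension n
    (n : ℕ) [Algebra.Smooth k Q] [Algebra.Smooth k S]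
    (hdimR : ∀ ω : Fin (n + 1) → Ω[Q⁄k],
      (List.ofFn (fun t => ExteriorAlgebra.ι Q (ω t))).prod = 0)
    (hdimS : ∀ ω : Fin (n + 1) → Ω[S⁄k],
      (List.ofFn (fun t => ExteriorAlgebra.ι S (ω t))).prod = 0)
    -- the matrix factorization E of f over R := Q
    (E₀ E₁ : Type u) [AddCommGroup E₀] [Module Q E₀] [AddCommGroup E₁] [Module Q E₁]
    [Module.Finite Q E₀] [Module.Projective Q E₀]
    [Module.Finite Q E₁] [Module.Projective Q E₁]
    (f : Q) (g : S) (hg : g = algebraMap Q S f)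
    (A : E₁ →ₗ[Q] E₀) (B : E₀ →ₗ[Q] E₁)
    (hAB : ∀ y, A (B y) = f • y) (hBA : ∀ x, B (A x) = f • x)
    -- connections on E₀, E₁ over R
    (na0 : Conn k Q E₀) (na1 : Conn k Q E₁)
    -- the Atiyah class of E over R
    (At₁ : E₁ →ₗ[Q] Ω[Q⁄k] ⊗[Q] E₀) (At₀ : E₀ →ₗ[Q] Ω[Q⁄k] ⊗[Q] E₁)
    (hAt₁ : ∀ e, At₁ e = na0.toFun (A e) - (LinearMap.lTensor (Ω[Q⁄k]) A) (na1.toFun e))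
    (hAt₀ : ∀ e, At₀ e = na1.toFun (B e) - (LinearMap.lTensor (Ω[Q⁄k]) B) (na0.toFun e))
    (AtR : (E₀ × E₁) →ₗ[Q] Ω[Q⁄k] ⊗[Q] (E₀ × E₁))
    (hAtR : AtR = (LinearMap.lTensor (Ω[Q⁄k]) (LinearMap.inr Q E₀ E₁)) ∘ₗ At₀ ∘ₗ
          LinearMap.fst Q E₀ E₁
        + (LinearMap.lTensor (Ω[Q⁄k]) (LinearMap.inl Q E₀ E₁)) ∘ₗ At₁ ∘ₗ
          LinearMap.snd Q E₀ E₁)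
    -- the base-change comparison maps (μ ⊗ 1)∘(− ⊗ 1_S) for E₀ and E₁
    (Ψ₀ : (Ω[Q⁄k] ⊗[Q] E₀) → (Ω[S⁄k] ⊗[S] (S ⊗[Q] E₀)))
    (hΨ₀add : ∀ x y, Ψ₀ (x + y) = Ψ₀ x + Ψ₀ y)
    (hΨ₀ : ∀ (ω : Ω[Q⁄k]) (e : E₀),
      Ψ₀ (ω ⊗ₜ[Q] e) = (KaehlerDifferential.map k k Q S ω) ⊗ₜ[S] ((1 : S) ⊗ₜ[Q] e))
    (Ψ₁ : (Ω[Q⁄k] ⊗[Q] E₁) → (Ω[S⁄k] ⊗[S] (S ⊗[Q] E₁)))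
    (hΨ₁add : ∀ x y, Ψ₁ (x + y) = Ψ₁ x + Ψ₁ y)
    (hΨ₁ : ∀ (ω : Ω[Q⁄k]) (e : E₁),
      Ψ₁ (ω ⊗ₜ[Q] e) = (KaehlerDifferential.map k k Q S ω) ⊗ₜ[S] ((1 : S) ⊗ₜ[Q] e))
    -- the induced connections ∇ᵢ⊗1 + 1⊗d_{S/k} on the base-changed modules
    (nb0 : Conn k S (S ⊗[Q] E₀)) (nb1 : Conn k S (S ⊗[Q] E₁))
    (hnb0 : ∀ (s : S) (e : E₀), nb0.toFun (s ⊗ₜ[Q] e)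
      = s • Ψ₀ (na0.toFun e) + (KaehlerDifferential.D k S s) ⊗ₜ[S] ((1 : S) ⊗ₜ[Q] e))
    (hnb1 : ∀ (s : S) (e : E₁), nb1.toFun (s ⊗ₜ[Q] e)
      = s • Ψ₁ (na1.toFun e) + (KaehlerDifferential.D k S s) ⊗ₜ[S] ((1 : S) ⊗ₜ[Q] e))
    -- the Atiyah class of the base change φ_*(E) = (E₁⊗S, E₀⊗S, A⊗1, B⊗1)
    (AtS₁ : (S ⊗[Q] E₁) →ₗ[S] Ω[S⁄k] ⊗[S] (S ⊗[Q] E₀))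
    (AtS₀ : (S ⊗[Q] E₀) →ₗ[S] Ω[S⁄k] ⊗[S] (S ⊗[Q] E₁))
    (hAtS₁ : ∀ z, AtS₁ z = nb0.toFun ((LinearMap.baseChange S A) z)
      - (LinearMap.lTensor (Ω[S⁄k]) (LinearMap.baseChange S A)) (nb1.toFun z))
    (hAtS₀ : ∀ z, AtS₀ z = nb1.toFun ((LinearMap.baseChange S B) z)
      - (LinearMap.lTensor (Ω[S⁄k]) (LinearMap.baseChange S B)) (nb0.toFun z))
    (AtS : ((S ⊗[Q] E₀) × (S ⊗[Q] E₁)) →ₗ[S]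
      Ω[S⁄k] ⊗[S] ((S ⊗[Q] E₀) × (S ⊗[Q] E₁)))
    (hAtS : AtS = (LinearMap.lTensor (Ω[S⁄k]) (LinearMap.inr S (S ⊗[Q] E₀) (S ⊗[Q] E₁))) ∘ₗ
          AtS₀ ∘ₗ LinearMap.fst S (S ⊗[Q] E₀) (S ⊗[Q] E₁)
        + (LinearMap.lTensor (Ω[S⁄k]) (LinearMap.inl S (S ⊗[Q] E₀) (S ⊗[Q] E₁))) ∘ₗ
          AtS₁ ∘ₗ LinearMap.snd S (S ⊗[Q] E₀) (S ⊗[Q] E₁))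
    -- presentations as retracts of finite free modules, over R and over S
    {r₀ r₁ t₀ t₁ : ℕ}
    (p₀ : (Fin r₀ → Q) →ₗ[Q] E₀) (s₀ : E₀ →ₗ[Q] (Fin r₀ → Q)) (hps₀ : ∀ e, p₀ (s₀ e) = e)
    (p₁ : (Fin r₁ → Q) →ₗ[Q] E₁) (s₁ : E₁ →ₗ[Q] (Fin r₁ → Q)) (hps₁ : ∀ e, p₁ (s₁ e) = e)
    (q₀ : (Fin t₀ → S) →ₗ[S] (S ⊗[Q] E₀)) (u₀ : (S ⊗[Q] E₀) →ₗ[S] (Fin t₀ → S))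
    (hqu₀ : ∀ e, q₀ (u₀ e) = e)
    (q₁ : (Fin t₁ → S) →ₗ[S] (S ⊗[Q] E₁)) (u₁ : (S ⊗[Q] E₁) →ₗ[S] (Fin t₁ → S))
    (hqu₁ : ∀ e, q₁ (u₁ e) = e)
    -- φ_* on forms: the ring homomorphism of exterior algebras induced by μ
    (Φ : ExteriorAlgebra Q (Ω[Q⁄k]) →+* ExteriorAlgebra S (Ω[S⁄k]))
    (hΦalg : ∀ r : Q, Φ (algebraMap Q (ExteriorAlgebra Q (Ω[Q⁄k])) r)
      = algebraMap S (ExteriorAlgebra S (Ω[S⁄k])) (algebraMap Q S r))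
    (hΦι : ∀ ω : Ω[Q⁄k], Φ (ExteriorAlgebra.ι Q ω)
      = ExteriorAlgebra.ι S (KaehlerDifferential.map k k Q S ω)) :
    -- (1) the Atiyah class of φ_*(E) is the base change of the Atiyah class of E …
    (∀ x : E₁, AtS₁ ((1 : S) ⊗ₜ[Q] x) = Ψ₀ (At₁ x)) ∧
    (∀ y : E₀, AtS₀ ((1 : S) ⊗ₜ[Q] y) = Ψ₁ (At₀ y)) ∧
    -- (2) … and consequently ch(φ_*(E)) = φ_*(ch(E)) in H₀((Ω•, dg, n)_{ℤ/2})
    (∃ w : ExteriorAlgebra S (Ω[S⁄k]),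
      (∑ i ∈ Finset.range (n + 1), (algebraMap ℚ S (1 / (i.factorial : ℚ))) •
          strT S q₀ u₀ q₁ u₁ (atIter k S ((S ⊗[Q] E₀) × (S ⊗[Q] E₁)) AtS i))
        - Φ (∑ i ∈ Finset.range (n + 1), (algebraMap ℚ Q (1 / (i.factorial : ℚ))) •
            strT Q p₀ s₀ p₁ s₁ (atIter k Q (E₀ × E₁) AtR i))
        = ExteriorAlgebra.ι S (KaehlerDifferential.D k S g) * w) := by
  classical
  let m : Ω[Q⁄k] →ₛₗ[algebraMap Q S] Ω[S⁄k] :=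
    { toFun := KaehlerDifferential.map k k Q S
      map_add' := map_add _
      map_smul' := fun r x => by
        rw [map_smul, algebraMap_smul] }
  let Φ' : ExteriorAlgebra Q (Ω[Q⁄k]) →ₛₗ[algebraMap Q S] ExteriorAlgebra S (Ω[S⁄k]) :=
    { toFun := Φ
      map_add' := map_add _
      map_smul' := fun r x => by
        rw [Algebra.smul_def, map_mul, hΦalg, ← Algebra.smul_def] }
  have hΨ₀' : ∀ z, Ψ₀ z = TensorProduct.map m (unitS S E₀) z := by
    have h0 : Ψ₀ 0 = 0 := by simpa using hΨ₀add 0 0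
    intro z
    induction z using TensorProduct.induction_on with
    | zero => rw [h0, map_zero]
    | add x y hx hy => rw [hΨ₀add, hx, hy, map_add]
    | tmul x y => rw [hΨ₀]; rfl
  have hΨ₁' : ∀ z, Ψ₁ z = TensorProduct.map m (unitS S E₁) z := by
    have h0 : Ψ₁ 0 = 0 := by simpa using hΨ₁add 0 0
    intro z
    induction z using TensorProduct.induction_on with
    | zero => rw [h0, map_zero]
    | add x y hx hy => rw [hΨ₁add, hx, hy, map_add]
    | tmul x y => rw [hΨ₁]; rfl
  have h1 : ∀ x : E₁, AtS₁ ((1 : S) ⊗ₜ[Q] x) = Ψ₀ (At₁ x) := by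
    intro x
    rw [hAtS₁, LinearMap.baseChange_tmul, hnb0, hnb1, hAt₁, hΨ₀', hΨ₀', hΨ₁', map_sub,
      ← lTensor_map_nat m (unitS S E₁) (unitS S E₀) A (LinearMap.baseChange S A)
        (fun x => by simp [unitS])]
    simp
  have h2 : ∀ x : E₀, AtS₀ ((1 : S) ⊗ₜ[Q] x) = Ψ₁ (At₀ x) := by
    intro x
    rw [hAtS₀, LinearMap.baseChange_tmul, hnb0, hnb1, hAt₀, hΨ₁', hΨ₀', hΨ₁', map_sub,
      ← lTensor_map_nat m (unitS S E₀) (unitS S E₁) B (LinearMap.baseChange S B)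
        (fun x => by simp [unitS])]
    simp
  refine ⟨h1, h2, 0, ?_⟩
  rw [mul_zero, sub_eq_zero]
  let β : (E₀ × E₁) →ₛₗ[algebraMap Q S] ((S ⊗[Q] E₀) × (S ⊗[Q] E₁)) :=
    { toFun := fun x => (unitS S E₀ x.1, unitS S E₁ x.2)
      map_add' := fun x y => by simp
      map_smul' := fun r x => by
        ext
        · exact (unitS S E₀).map_smulₛₗ r x.1
        · exact (unitS S E₁).map_smulₛₗ r x.2 }
  have hAt : ∀ x, AtS (β x) = TensorProduct.map m β (AtR x) := by
    intro x
    have e0 : AtS₀ (unitS S E₀ x.1) = TensorProduct.map m (unitS S E₁) (At₀ x.1) :=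
      (h2 x.1).trans (hΨ₁' _)
    have e1 : AtS₁ (unitS S E₁ x.2) = TensorProduct.map m (unitS S E₀) (At₁ x.2) :=
      (h1 x.2).trans (hΨ₀' _)
    rw [hAtS, hAtR]
    simp only [LinearMap.add_apply, LinearMap.comp_apply, map_add]
    rw [← lTensor_map_nat m (unitS S E₁) β (LinearMap.inr Q E₀ E₁)
        (LinearMap.inr S (S ⊗[Q] E₀) (S ⊗[Q] E₁)) (fun y => by ext <;> simp [β]),
      ← lTensor_map_nat m (unitS S E₀) β (LinearMap.inl Q E₀ E₁)
        (LinearMap.inl S (S ⊗[Q] E₀) (S ⊗[Q] E₁)) (fun y => by ext <;> simp [β])]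
    exact congrArg₂ (· + ·) (congrArg _ e0) (congrArg _ e1)
  have hit := atIter_nat (k := k) m Φ' (map_one Φ) (map_mul Φ) hΦι β AtR AtS hAt
  have hstr : ∀ i, strT S q₀ u₀ q₁ u₁ (atIter k S ((S ⊗[Q] E₀) × (S ⊗[Q] E₁)) AtS i)
      = Φ' (strT Q p₀ s₀ p₁ s₁ (atIter k Q (E₀ × E₁) AtR i)) := by
    intro i
    rw [strT, strT, map_sub]
    congr 1
    · refine trC_nat p₀ s₀ hps₀ q₀ u₀ hqu₀ Φ' _ _ fun x => ?_
      simp only [LinearMap.comp_apply]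
      rw [← lTensor_map_nat Φ' β (unitS S E₀) (LinearMap.fst Q E₀ E₁)
        (LinearMap.fst S (S ⊗[Q] E₀) (S ⊗[Q] E₁)) (fun y => rfl), ← hit]
      congr 2
      ext <;> simp [β]
    · refine trC_nat p₁ s₁ hps₁ q₁ u₁ hqu₁ Φ' _ _ fun x => ?_
      simp only [LinearMap.comp_apply]
      rw [← lTensor_map_nat Φ' β (unitS S E₁) (LinearMap.snd Q E₀ E₁)
        (LinearMap.snd S (S ⊗[Q] E₀) (S ⊗[Q] E₁)) (fun y => rfl), ← hit]
      congr 2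
      ext <;> simp [β]
  rw [map_sum]
  refine Finset.sum_congr rfl fun i _ => ?_
  rw [hstr]
  have hq : algebraMap ℚ S (1 / (i.factorial : ℚ))
      = algebraMap Q S (algebraMap ℚ Q (1 / (i.factorial : ℚ))) :=
    congrArg (fun h : ℚ →+* S => h (1 / (i.factorial : ℚ)))
      (Subsingleton.elim (algebraMap ℚ S) ((algebraMap Q S).comp (algebraMap ℚ Q)))
  rw [hq]
  exact (Φ'.map_smulₛₗ _ _).symm
end
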